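/- For each fixed m ≥ 1, the sequence n ↦ β_{3(2m+1)2ⁿ} (n ≥ 0) is strictly decreasing and converges to β_c as n → ∞. -/

import Mathlib

open Filter Set

noncomputable section

namespace FatSierpinski

/-- The digit set Ω = {(0,0),(1,0),(0,1)} ⊆ ℝ². -/
def OmegaR : Set (ℝ × ℝ) := {(0, 0), (1, 0), (0, 1)}

/-- The fat Sierpinski gasket `S_β` (sequences are 0-indexed: `d i` is the digit d_{i+1}). -/
def Sfat (β : ℝ) : Set (ℝ × ℝ) :=
  {x | ∃ d : ℕ → ℝ × ℝ, (∀ i, d i ∈ OmegaR) ∧ x = ∑' i : ℕ, (β ^ (i + 1))⁻¹ • d i}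

/-- The convex hull `Δ_β` of `S_β`. -/
def Delta (β : ℝ) : Set (ℝ × ℝ) := convexHull ℝ (Sfat β)

/-- The map `f_d(x) = (x + d)/β`. -/
def fmap (β : ℝ) (d : ℝ × ℝ) (x : ℝ × ℝ) : ℝ × ℝ := β⁻¹ • (x + d)

/-- The overlap region `O_β = ⋃_{c ≠ d ∈ Ω} f_c(Δ_β) ∩ f_d(Δ_β)`. -/
def Ofat (β : ℝ) : Set (ℝ × ℝ) :=
  ⋃ c ∈ OmegaR, ⋃ d ∈ OmegaR, ⋃ (_ : c ≠ d), (fmap β c '' Delta β) ∩ (fmap β d '' Delta β)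

/-- The univoque set of codings `𝐔_β`. -/
def Ufat (β : ℝ) : Set (ℕ → ℝ × ℝ) :=
  {d | (∀ i, d i ∈ OmegaR) ∧
    ∀ n : ℕ, (∑' i : ℕ, (β ^ (i + 1))⁻¹ • d (n + i)) ∉ Ofat β}

/-- `d` has smallest period `k`. -/
def SmallestPeriod {α : Type*} (d : ℕ → α) (k : ℕ) : Prop :=
  0 < k ∧ (∀ i, d (i + k) = d i) ∧ ∀ j, 0 < j → j < k → ∃ i, d (i + j) ≠ d i

/-- The critical base `β_k`. -/
def betaK (k : ℕ) : ℝ :=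
  sInf {β : ℝ | β ∈ Set.Ioc (1 : ℝ) 2 ∧ ∃ d ∈ Ufat β, SmallestPeriod d k}

/-- Strict lexicographic order on sequences. -/
def seqLT {α : Type*} [Preorder α] (a b : ℕ → α) : Prop :=
  ∃ n, (∀ i < n, a i = b i) ∧ a n < b n

/-- Weak lexicographic order on sequences. -/
def seqLE {α : Type*} [Preorder α] (a b : ℕ → α) : Prop :=
  seqLT a b ∨ a = b

/-- `a` is a 0-1 sequence. -/
def IsBinary (a : ℕ → ℕ) : Prop := ∀ i, a i ≤ 1

/-- `a` does not end with `0^∞`. -/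
def NotEndInZeros (a : ℕ → ℕ) : Prop := ∀ N, ∃ i, N ≤ i ∧ a i ≠ 0

/-- `∑_{i=1}^∞ a_i β^{-i} = 1` (0-indexed: `a i` is a_{i+1}). -/
def SumsToOne (β : ℝ) (a : ℕ → ℕ) : Prop :=
  ∑' i : ℕ, (a i : ℝ) / β ^ (i + 1) = 1

/-- `a` is the quasi-greedy β-expansion of 1: the lexicographically largest
binary sequence not ending in `0^∞` whose value in base β is 1. -/
def IsQuasiGreedy (β : ℝ) (a : ℕ → ℕ) : Prop :=
  IsBinary a ∧ NotEndInZeros a ∧ SumsToOne β a ∧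
    ∀ b : ℕ → ℕ, IsBinary b → NotEndInZeros b → SumsToOne β b → seqLE b a

/-- `w⁺`: replace the final digit 0 of a block by 1. -/
def plusBlock (w : List ℕ) : List ℕ := w.dropLast ++ [1]

/-- `Θ` flips the outer digits of every consecutive triple
(000↦101, 001↦100, 100↦001, 101↦000). -/
def thetaBlock (w : List ℕ) : List ℕ :=
  w.mapIdx fun i x => if i % 3 = 1 then x else 1 - x

/-- `tB n` is the block `t_{n+1}`: `t_1 = 100`, `t_{n+1} = t_n⁺ Θ(t_n⁺)`. -/
def tB : ℕ → List ℕ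
  | 0 => [1, 0, 0]
  | n + 1 => plusBlock (tB n) ++ thetaBlock (plusBlock (tB n))

/-- The sequence `u w^∞` (the block `u` followed by `w` repeated forever). -/
def prefixPeriodic (u w : List ℕ) : ℕ → ℕ := fun i =>
  if i < u.length then u.getD i 0 else w.getD ((i - u.length) % w.length) 0

/-- The periodic sequence `w^∞`. -/
def periodicSeq (w : List ℕ) : ℕ → ℕ := fun i => w.getD (i % w.length) 0

/-- The componentwise limit `λ = 101001000101…` of the blocks `t_n`
(the digit `λ_{i+1}` has stabilized in `t_{i+2} = tB (i+1)`). -/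
def lamSeq : ℕ → ℕ := fun i => (tB (i + 1)).getD i 0

/-- `β_c` is the unique base in (1,2] with `∑ λ_i β^{-i} = 1`. -/
def IsBetaC (β : ℝ) : Prop := β ∈ Set.Ioc (1 : ℝ) 2 ∧ SumsToOne β lamSeq

/-- The sequence `t_{n+2}⁺ (Θ(t_{n+2}))^∞`, the quasi-greedy expansion of 1 for `β̂_n`. -/
def hatSeq (n : ℕ) : ℕ → ℕ :=
  prefixPeriodic (plusBlock (tB (n + 1))) (thetaBlock (tB (n + 1)))

/-- The Sharkovskii ordering `k ⊳ ℓ` on positive integers. -/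
def Sharkovskii (k l : ℕ) : Prop :=
  ∃ a b c d : ℕ, k = 2 ^ a * (2 * b + 1) ∧ l = 2 ^ c * (2 * d + 1) ∧ k ≠ l ∧
    ((1 ≤ b ∧ d = 0) ∨ (1 ≤ b ∧ 1 ≤ d ∧ (a < c ∨ (a = c ∧ b < d))) ∨
      (b = 0 ∧ d = 0 ∧ c < a))

/-- The digit set Ω as pairs of naturals (for combinatorial statements). -/
def OmegaD : Set (ℕ × ℕ) := {(0, 0), (1, 0), (0, 1)}

/-- The periodic extension `(d_1 … d_k)^∞` of a block. -/
def cyc (d : List (ℕ × ℕ)) : ℕ → ℕ × ℕ := fun i => d.getD (i % d.length) (0, 0)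

/-- Strict lexicographic order on lists. -/
def listLT (u v : List ℕ) : Prop := List.Lex (· < ·) u v

/-- Weak lexicographic order on lists. -/
def listLE (u v : List ℕ) : Prop := listLT u v ∨ u = v

/-- The first components `d_1¹ … d_k¹` of a block over Ω. -/
def comp1 (d : List (ℕ × ℕ)) : List ℕ := d.map Prod.fst

/-- The second components `d_1² … d_k²` of a block over Ω. -/
def comp2 (d : List (ℕ × ℕ)) : List ℕ := d.map Prod.snd

/-- The digits `(1 - d_1⁺) … (1 - d_k⁺)` where `d⁺ = d¹ + d²`. -/
def comp3 (d : List (ℕ × ℕ)) : List ℕ := d.map fun x => 1 - x.1 - x.2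

/-- Cyclic shift of a list by `j`. -/
def rot {α : Type*} (j : ℕ) (l : List α) : List α := l.drop j ++ l.take j

/-- `d` is a representation of the binary block `a`. -/
def IsRepresentation (a : List ℕ) (d : List (ℕ × ℕ)) : Prop :=
  d.length = a.length ∧ (∀ x ∈ d, x ∈ OmegaD) ∧
  SmallestPeriod (cyc d) a.length ∧
  comp1 d = a ∧ listLE (comp3 d) (comp2 d) ∧ listLE (comp2 d) a ∧
  ∀ j < a.length,
    listLE (comp1 (rot j d)) a ∧ listLE (comp2 (rot j d)) a ∧ listLE (comp3 (rot j d)) a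

/-- A binary block is admissible if it has a representation. -/
def IsAdmissible (a : List ℕ) : Prop := ∃ d, IsRepresentation a d

/-- The `i`-th consecutive triple of a block (0-indexed). -/
def tripleAt (a : List ℕ) (i : ℕ) : List ℕ :=
  [a.getD (3 * i) 0, a.getD (3 * i + 1) 0, a.getD (3 * i + 2) 0]

/-- The edges of the directed graph on {000, 001, 100, 101} defining the subshift `X`. -/
def XEdge (u v : List ℕ) : Prop :=
  (u, v) ∈ ({([1,0,1], [0,0,1]), ([1,0,1], [0,0,0]), ([0,0,1], [0,0,0]),
             ([0,0,0], [1,0,1]), ([0,0,0], [1,0,0]), ([1,0,0], [1,0,1])} :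
      Set (List ℕ × List ℕ))



/-! ### Sequences and the lexicographic order -/

/-- Shift of a sequence. -/
def sh {α : Type*} (n : ℕ) (a : ℕ → α) : ℕ → α := fun i => a (n + i)

/-- Indicator sequence of the letter `j`. -/
def ind (j : Fin 3) (d : ℕ → Fin 3) : ℕ → Bool := fun i => decide (d i = j)

/-- The tail of `x` after index `i`, reflected when `x i` is one. -/
def yy (x : ℕ → Bool) (i : ℕ) : ℕ → Bool := fun j => xor (x i) (x (i + 1 + j))

/-- The renormalization map on bounds. -/
def R (α : ℕ → Bool) : ℕ → Bool := fun n =>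
  if n = 0 then true else if n % 2 = 1 then α (n / 2) else !α (n / 2 - 1)

/-- The map from one-dimensional bounds to gasket bounds. -/
def T (α : ℕ → Bool) : ℕ → Bool := fun n =>
  if n = 0 then true else if n % 3 = 1 then false else
    if n % 3 = 2 then α (n / 3) else !α (n / 3 - 1)

/-- Doubling of a binary sequence. -/
def Dd (x : ℕ → Bool) : ℕ → Bool := fun n => if n % 2 = 0 then !x (n / 2) else x (n / 2)

/-- Letter coding of a bit, with distinguished letter `b`. -/
def let3 (b : Fin 3) (c : Bool) : Fin 3 := if c then b + 2 else b + 1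

/-- Triple form sequence. -/
def Tri (b : Fin 3) (x : ℕ → Bool) : ℕ → Fin 3 := fun n =>
  if n % 3 = 0 then let3 b (!x (n / 3)) else if n % 3 = 1 then let3 b (x (n / 3)) else b

/-- Thue–Morse. -/
def tm : ℕ → Bool
  | 0 => false
  | n + 1 => xor (decide ((n + 1) % 2 = 1)) (tm ((n + 1) / 2))

/-- Shifted Thue–Morse. -/
def tau : ℕ → Bool := fun i => tm (i + 1)

lemma R_zero (α : ℕ → Bool) : R α 0 = true := by simp [R]
lemma R_odd (α : ℕ → Bool) (i : ℕ) : R α (2 * i + 1) = α i := by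
  have h1 : (2 * i + 1) % 2 = 1 := by omega
  have h2 : (2 * i + 1) / 2 = i := by omega
  simp [R, h1, h2]
lemma R_even (α : ℕ → Bool) (i : ℕ) : R α (2 * i + 2) = !α i := by
  have h1 : (2 * i + 2) % 2 = 0 := by omega
  have h2 : (2 * i + 2) / 2 = i + 1 := by omega
  simp [R, h2]
lemma T_zero (α : ℕ → Bool) : T α 0 = true := by simp [T]
lemma T_one (α : ℕ → Bool) (i : ℕ) : T α (3 * i + 1) = false := by
  have h1 : (3 * i + 1) % 3 = 1 := by omega
  simp [T, h1]
lemma T_two (α : ℕ → Bool) (i : ℕ) : T α (3 * i + 2) = α i := by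
  have h1 : (3 * i + 2) % 3 = 2 := by omega
  have h2 : (3 * i + 2) / 3 = i := by omega
  simp [T, h1, h2]
lemma T_three (α : ℕ → Bool) (i : ℕ) : T α (3 * i + 3) = !α i := by
  have h1 : (3 * i + 3) % 3 = 0 := by omega
  have h2 : (3 * i + 3) / 3 = i + 1 := by omega
  simp [T, h2]
lemma Dd_even (x : ℕ → Bool) (i : ℕ) : Dd x (2 * i) = !x i := by
  have h1 : (2 * i) % 2 = 0 := by omega
  have h2 : (2 * i) / 2 = i := by omega
  simp [Dd]
lemma Dd_odd (x : ℕ → Bool) (i : ℕ) : Dd x (2 * i + 1) = x i := by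
  have h1 : (2 * i + 1) % 2 = 1 := by omega
  have h2 : (2 * i + 1) / 2 = i := by omega
  simp [Dd, h1, h2]
lemma Tri_zero (b : Fin 3) (x : ℕ → Bool) (i : ℕ) : Tri b x (3 * i) = let3 b (!x i) := by
  have h1 : (3 * i) % 3 = 0 := by omega
  have h2 : (3 * i) / 3 = i := by omega
  simp [Tri]
lemma Tri_one (b : Fin 3) (x : ℕ → Bool) (i : ℕ) : Tri b x (3 * i + 1) = let3 b (x i) := by
  have h1 : (3 * i + 1) % 3 = 1 := by omega
  have h2 : (3 * i + 1) / 3 = i := by omega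
  simp [Tri, h1, h2]
lemma Tri_two (b : Fin 3) (x : ℕ → Bool) (i : ℕ) : Tri b x (3 * i + 2) = b := by
  have h1 : (3 * i + 2) % 3 = 2 := by omega
  simp [Tri, h1]
lemma tm_even (n : ℕ) : tm (2 * n) = tm n := by
  rcases n with _ | n
  · rfl
  · have h2 : (2 * n + 1 + 1) / 2 = n + 1 := by omega
    have h1 : (2 * n + 1 + 1) % 2 = 0 := by omega
    rw [show 2 * (n + 1) = 2 * n + 1 + 1 by ring, tm, h1, h2]; simp
lemma tm_odd (n : ℕ) : tm (2 * n + 1) = !tm n := by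
  have h2 : (2 * n + 1) / 2 = n := by omega
  have h1 : (2 * n + 1) % 2 = 1 := by omega
  rw [tm, h1, h2]; simp

lemma let3_inj (b : Fin 3) (c e : Bool) : let3 b c = let3 b e ↔ c = e := by
  revert b c e; decide
lemma let3_ne (b : Fin 3) (c : Bool) : let3 b c ≠ b := by revert b c; decide
lemma ne_let3 (b : Fin 3) (c : Bool) : b ≠ let3 b c := by revert b c; decide

lemma llt_iff (a b : ℕ → Bool) :
    toLex a < toLex b ↔ ∃ n, (∀ i < n, a i = b i) ∧ a n = false ∧ b n = true := by
  constructor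
  · rintro ⟨n, h1, h2⟩
    refine ⟨n, h1, ?_⟩
    have h2' : a n < b n := h2
    revert h2'; cases a n <;> cases b n <;> simp
  · rintro ⟨n, h1, h2, h3⟩
    refine ⟨n, h1, ?_⟩
    show a n < b n
    rw [h2, h3]; decide

lemma even_odd_cases (n : ℕ) : n = 0 ∨ (∃ i, n = 2 * i + 1) ∨ ∃ i, n = 2 * i + 2 := by
  rcases Nat.even_or_odd' n with ⟨k, hk | hk⟩
  · rcases k with _ | k
    · left; omega
    · right; right; exact ⟨k, by omega⟩
  · right; left; exact ⟨k, hk⟩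

lemma mod3_cases (n : ℕ) : (∃ i, n = 3 * i) ∨ (∃ i, n = 3 * i + 1) ∨ ∃ i, n = 3 * i + 2 := by
  have : n % 3 = 0 ∨ n % 3 = 1 ∨ n % 3 = 2 := by omega
  rcases this with h | h | h
  · left; exact ⟨n / 3, by omega⟩
  · right; left; exact ⟨n / 3, by omega⟩
  · right; right; exact ⟨n / 3, by omega⟩

lemma mod3_cases' (n : ℕ) :
    n = 0 ∨ (∃ i, n = 3 * i + 1) ∨ (∃ i, n = 3 * i + 2) ∨ ∃ i, n = 3 * i + 3 := by
  rcases mod3_cases n with ⟨i, h⟩ | h | h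
  · rcases i with _ | i
    · left; omega
    · right; right; right; exact ⟨i, by omega⟩
  · right; left; exact h
  · right; right; left; exact h

lemma R_agree {α γ : ℕ → Bool} {n : ℕ} (h : ∀ i < n, α i = γ i) :
    ∀ i < 2 * n + 1, R α i = R γ i := by
  intro i hi
  rcases even_odd_cases i with rfl | ⟨k, rfl⟩ | ⟨k, rfl⟩
  · simp [R_zero]
  · rw [R_odd, R_odd, h k (by omega)]
  · rw [R_even, R_even, h k (by omega)]

lemma T_agree {α γ : ℕ → Bool} {n : ℕ} (h : ∀ i < n, α i = γ i) :
    ∀ i < 3 * n + 2, T α i = T γ i := by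
  intro i hi
  rcases mod3_cases' i with rfl | ⟨k, rfl⟩ | ⟨k, rfl⟩ | ⟨k, rfl⟩
  · simp [T_zero]
  · simp [T_one]
  · rw [T_two, T_two, h k (by omega)]
  · rw [T_three, T_three, h k (by omega)]

lemma R_lt {α γ : ℕ → Bool} (h : toLex α < toLex γ) : toLex (R α) < toLex (R γ) := by
  rw [llt_iff] at h ⊢
  obtain ⟨n, h1, h2, h3⟩ := h
  exact ⟨2 * n + 1, R_agree h1, by rw [R_odd, h2], by rw [R_odd, h3]⟩

lemma T_lt {α γ : ℕ → Bool} (h : toLex α < toLex γ) : toLex (T α) < toLex (T γ) := by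
  rw [llt_iff] at h ⊢
  obtain ⟨n, h1, h2, h3⟩ := h
  exact ⟨3 * n + 2, T_agree h1, by rw [T_two, h2], by rw [T_two, h3]⟩

lemma R_le {α γ : ℕ → Bool} (h : toLex α ≤ toLex γ) : toLex (R α) ≤ toLex (R γ) := by
  rcases h.eq_or_lt with h | h
  · rw [toLex_inj.1 h]
  · exact (R_lt h).le

lemma T_le {α γ : ℕ → Bool} (h : toLex α ≤ toLex γ) : toLex (T α) ≤ toLex (T γ) := by
  rcases h.eq_or_lt with h | h
  · rw [toLex_inj.1 h]
  · exact (T_lt h).le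

lemma R_le_iff {α γ : ℕ → Bool} : toLex (R α) ≤ toLex (R γ) ↔ toLex α ≤ toLex γ :=
  ⟨fun h => le_of_not_gt fun h' => absurd (R_lt h') (not_lt.2 h), R_le⟩

lemma T_le_iff {α γ : ℕ → Bool} : toLex (T α) ≤ toLex (T γ) ↔ toLex α ≤ toLex γ :=
  ⟨fun h => le_of_not_gt fun h' => absurd (T_lt h') (not_lt.2 h), T_le⟩

lemma lle_of_limit {a t : ℕ → Bool}
    (h : ∀ n, ∃ c : ℕ → Bool, toLex a ≤ toLex c ∧ ∀ i < n, c i = t i) : toLex a ≤ toLex t := by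
  by_contra hc
  obtain ⟨n, h1, h2, h3⟩ := (llt_iff _ _).1 (not_le.1 hc)
  obtain ⟨c, hc1, hc2⟩ := h (n + 1)
  refine absurd hc1 (not_le.2 ((llt_iff _ _).2 ⟨n, fun i hi => ?_, ?_, h3⟩))
  · rw [hc2 i (by omega), h1 i hi]
  · rw [hc2 n (by omega), h2]

lemma tm_zero : tm 0 = false := by rw [tm]
lemma tm_one : tm 1 = true := by rw [show 1 = 2 * 0 + 1 by rfl, tm_odd, tm_zero]; rfl
lemma tm_two : tm 2 = true := by rw [show 2 = 2 * 1 by rfl, tm_even, tm_one]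
lemma tm_three : tm 3 = false := by rw [show 3 = 2 * 1 + 1 by rfl, tm_odd, tm_one]; rfl

lemma tau_zero : tau 0 = true := tm_one
lemma tau_one : tau 1 = true := tm_two
lemma tau_two : tau 2 = false := tm_three

lemma R_tau : R tau = tau := by
  funext n
  rcases even_odd_cases n with rfl | ⟨k, rfl⟩ | ⟨k, rfl⟩
  · rw [R_zero, tau_zero]
  · rw [R_odd, tau, tau, show 2 * k + 1 + 1 = 2 * (k + 1) by ring, tm_even]
  · rw [R_even, tau, tau, show 2 * k + 2 + 1 = 2 * (k + 1) + 1 by ring, tm_odd]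

lemma Riter_agree (α : ℕ → Bool) (n : ℕ) : ∀ i < n, (R^[n] α) i = tau i := by
  induction n with
  | zero => intro i hi; omega
  | succ n ih =>
    intro i hi
    rw [Function.iterate_succ_apply', ← R_tau]
    exact R_agree ih i (by omega)

lemma Riter_zero {α : ℕ → Bool} (h : α 0 = true) (n : ℕ) : (R^[n] α) 0 = true := by
  cases n with
  | zero => exact h
  | succ n => rw [Function.iterate_succ_apply', R_zero]

/-- Bounds pass through doubling. -/
lemma yy_Dd_even (x : ℕ → Bool) (i : ℕ) : yy (Dd x) (2 * i) = R (yy x i) := by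
  funext n
  rcases even_odd_cases n with rfl | ⟨k, rfl⟩ | ⟨k, rfl⟩
  · rw [R_zero, yy, Dd_even, show 2 * i + 1 + 0 = 2 * i + 1 by ring, Dd_odd]
    cases x i <;> rfl
  · rw [R_odd, yy, yy, Dd_even, show 2 * i + 1 + (2 * k + 1) = 2 * (i + 1 + k) by ring, Dd_even]
    simp
  · rw [R_even, yy, yy, Dd_even, show 2 * i + 1 + (2 * k + 2) = 2 * (i + 1 + k) + 1 by ring, Dd_odd]
    simp

lemma yy_Dd_le {x α : ℕ → Bool} (h : ∀ i, toLex (yy x i) ≤ toLex α) (h0 : α 0 = true) (i : ℕ) :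
    toLex (yy (Dd x) i) ≤ toLex (R α) := by
  rcases Nat.even_or_odd' i with ⟨k, rfl | rfl⟩
  · rw [yy_Dd_even]; exact R_le (h k)
  · have e0 : yy (Dd x) (2 * k + 1) 0 = xor (x k) (!x (k + 1)) := by
      rw [yy, Dd_odd, show 2 * k + 1 + 1 + 0 = 2 * (k + 1) by ring, Dd_even]
    have e1 : yy (Dd x) (2 * k + 1) 1 = xor (x k) (x (k + 1)) := by
      rw [yy, Dd_odd, show 2 * k + 1 + 1 + 1 = 2 * (k + 1) + 1 by ring, Dd_odd]
    have r0 := R_zero α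
    have r1 : R α 1 = true := by rw [show 1 = 2 * 0 + 1 by rfl, R_odd, h0]
    apply le_of_lt
    apply (llt_iff _ _).2
    by_cases hx : yy (Dd x) (2 * k + 1) 0 = true
    · refine ⟨1, ?_, ?_, r1⟩
      · intro i hi
        have : i = 0 := by omega
        subst this
        rw [hx, r0]
      · rw [e0] at hx; rw [e1]
        revert hx; cases x k <;> cases x (k + 1) <;> simp
    · exact ⟨0, by simp, by simpa using hx, r0⟩

lemma sh_ind_Tri (b : Fin 3) (x : ℕ → Bool) (i : ℕ) :
    sh (3 * i + 1) (ind (let3 b (x i)) (Tri b x)) = T (yy x i) := by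
  funext n
  rcases mod3_cases' n with rfl | ⟨k, rfl⟩ | ⟨k, rfl⟩ | ⟨k, rfl⟩
  · rw [T_zero, sh, ind, add_zero, Tri_one]; simp
  · rw [T_one, sh, ind, show 3 * i + 1 + (3 * k + 1) = 3 * (i + k) + 2 by ring, Tri_two]
    simp [ne_let3]
  · rw [T_two, sh, ind, show 3 * i + 1 + (3 * k + 2) = 3 * (i + 1 + k) by ring, Tri_zero, yy]
    simp only [let3_inj]
    cases x i <;> cases x (i + 1 + k) <;> rfl
  · rw [T_three, sh, ind, show 3 * i + 1 + (3 * k + 3) = 3 * (i + 1 + k) + 1 by ring, Tri_one, yy]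
    simp only [let3_inj]
    cases x i <;> cases x (i + 1 + k) <;> rfl

lemma sh_ind_Tri_le {x α : ℕ → Bool} (h : ∀ i, toLex (yy x i) ≤ toLex α) (h0 : α 0 = true)
    (b : Fin 3) (n : ℕ) (j : Fin 3) :
    toLex (sh n (ind j (Tri b x))) ≤ toLex (T α) := by
  have t0 := T_zero α
  have t1 : T α 1 = false := by rw [show 1 = 3 * 0 + 1 by rfl, T_one]
  have t2 : T α 2 = true := by rw [show 2 = 3 * 0 + 2 by rfl, T_two, h0]
  by_cases hj : Tri b x n = j
  swap
  · apply le_of_lt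
    apply (llt_iff _ _).2
    exact ⟨0, by simp, by simp [sh, ind, hj], t0⟩
  have key : Tri b x (n + 1) ≠ j → Tri b x (n + 2) ≠ j →
      toLex (sh n (ind j (Tri b x))) ≤ toLex (T α) := by
    intro k1 k2
    apply le_of_lt
    apply (llt_iff _ _).2
    refine ⟨2, ?_, by simp [sh, ind, k2], t2⟩
    intro i hi
    interval_cases i
    · simp [sh, ind, hj, t0]
    · simp [sh, ind, k1, t1]
  subst hj
  rcases mod3_cases n with ⟨i, rfl⟩ | ⟨i, rfl⟩ | ⟨i, rfl⟩
  · apply key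
    · rw [Tri_one, Tri_zero, Ne, let3_inj]; simp
    · rw [Tri_two, Tri_zero]; exact ne_let3 _ _
  · rw [Tri_one, sh_ind_Tri]; exact T_le (h i)
  · apply key
    · rw [Tri_two, show 3 * i + 2 + 1 = 3 * (i + 1) by ring, Tri_zero]; exact let3_ne _ _
    · rw [Tri_two, show 3 * i + 2 + 2 = 3 * (i + 1) + 1 by ring, Tri_one]; exact let3_ne _ _

/-- Thue–Morse is self-bounded. -/
lemma tm_bound (i : ℕ) : toLex (yy tm i) ≤ toLex tau := by
  have hD : Dd (fun i => !tm i) = tm := by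
    funext n
    rcases Nat.even_or_odd' n with ⟨k, rfl | rfl⟩
    · rw [Dd_even, tm_even]; simp
    · rw [Dd_odd, tm_odd]
  have hneg : ∀ i, yy (fun i => !tm i) i = yy tm i := by
    intro i; funext j; simp [yy]
  have hb : ∀ n i, toLex (yy tm i) ≤ toLex (R^[n] (fun _ => true)) := by
    intro n
    induction n with
    | zero =>
      intro i
      apply le_of_not_gt
      intro hlt
      obtain ⟨n, _, h, _⟩ := (llt_iff _ _).1 hlt
      simp at h
    | succ n ih =>
      intro i
      rw [Function.iterate_succ_apply']
      have := yy_Dd_le (x := fun i => !tm i) (α := R^[n] (fun _ => true))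
        (fun i => by rw [hneg]; exact ih i) (Riter_zero rfl n) i
      rwa [hD] at this
  exact lle_of_limit fun n => ⟨_, hb n i, Riter_agree _ n⟩

/-- All shifts of `T tau` are at most `T tau`. -/
lemma lam_shift (n : ℕ) : toLex (sh n (T tau)) ≤ toLex (T tau) := by
  have h : T tau = sh 1 (ind (let3 0 (tm 0)) (Tri 0 tm)) := by
    have := sh_ind_Tri 0 tm 0
    rw [show 3 * 0 + 1 = 1 by rfl] at this
    rw [this]
    congr 1
    funext j
    have h0 := tm_zero
    rw [yy, h0, tau]
    simp [add_comm]
  have h2 : sh n (T tau) = sh (1 + n) (ind (let3 0 (tm 0)) (Tri 0 tm)) := by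
    rw [h]; funext i; simp [sh, add_assoc]
  rw [h2]
  exact sh_ind_Tri_le tm_bound tau_zero _ _ _

/-! ### Periodicity -/

lemma per_mul {α : Type*} {d : ℕ → α} {k : ℕ} (h : ∀ i, d (i + k) = d i) (t i : ℕ) :
    d (i + t * k) = d i := by
  induction t with
  | zero => simp
  | succ t ih => rw [show i + (t + 1) * k = i + t * k + k by ring, h, ih]

lemma per_of_sh {α : Type*} {d : ℕ → α} {k p s : ℕ} (hk : 0 < k) (h : ∀ i, d (i + k) = d i)
    (hs : ∀ i, sh s d (i + p) = sh s d i) (i : ℕ) : d (i + p) = d i := by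
  have hsk : s ≤ i + s * k := by nlinarith
  obtain ⟨r, hr⟩ := Nat.exists_eq_add_of_le hsk
  have := hs r
  simp only [sh] at this
  rw [← per_mul h s i, ← per_mul h s (i + p), show i + p + s * k = s + (r + p) by omega, this, hr]

lemma nonrep_of {α : Type*} {d : ℕ → α} {k : ℕ} (hk : 0 < k) (h : ∀ i, d (i + k) = d i)
    (hf : ∀ i, d i ≠ d (i + 1) → d (i + 1) ≠ d (i + 2)) (i0 : ℕ) (h0 : d i0 ≠ d (i0 + 1)) (i : ℕ) :
    d i ≠ d (i + 1) := by
  have hfw : ∀ n, d (i0 + n) ≠ d (i0 + n + 1) := by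
    intro n
    induction n with
    | zero => exact h0
    | succ n ih => exact hf _ ih
  have hsk : i0 ≤ i + i0 * k := by nlinarith
  obtain ⟨r, hr⟩ := Nat.exists_eq_add_of_le hsk
  rw [← per_mul h i0 i, ← per_mul h i0 (i + 1), show i + 1 + i0 * k = i0 + r + 1 by omega, hr]
  exact hfw r

lemma exists_ne_of_sp {α : Type*} {d : ℕ → α} {k : ℕ} (h : SmallestPeriod d k) (hk : 2 ≤ k) :
    ∃ i, d i ≠ d (i + 1) := by
  obtain ⟨i, hi⟩ := h.2.2 1 (by omega) (by omega)
  exact ⟨i, fun e => hi e.symm⟩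

lemma not_lle_of {a c : ℕ → Bool} (n : ℕ) (h1 : ∀ i < n, c i = a i) (h2 : c n = false)
    (h3 : a n = true) : ¬ toLex a ≤ toLex c :=
  not_le.2 ((llt_iff _ _).2 ⟨n, h1, h2, h3⟩)

lemma wordcheck (l0 l1 l2 l3 l4 l5 l6 l7 l8 : Fin 3) (h01 : l0 ≠ l1)
    (h12 : l1 ≠ l2) (h23 : l2 ≠ l3) (h34 : l3 ≠ l4) (h45 : l4 ≠ l5) (h56 : l5 ≠ l6) (h67 : l6 ≠ l7)
    (h78 : l7 ≠ l8) (c0 : ¬ (l0 = l2 ∧ l2 = l4)) (c1 : ¬ (l1 = l3 ∧ l3 = l5))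
    (c4 : ¬ (l4 = l6 ∧ l6 = l8))
    (e0 : ¬ (l0 = l2 ∧ l2 = l5 ∧ l5 = l7)) (e1 : ¬ (l1 = l3 ∧ l3 = l6 ∧ l6 = l8))
    (f0 : ¬ (l0 = l2 ∧ l2 = l5 ∧ l5 = l8)) (ht : l0 = l2) :
    l4 = l1 ∧ (l3 = l5 ∨ (l7 = l1 ∧ l6 = l8)) := by
  subst ht
  have hz : ∃ c : Fin 3, c ≠ l0 ∧ c ≠ l1 ∧ ∀ z, z = l0 ∨ z = l1 ∨ z = c := by
    clear * - h01
    revert l0 l1; decide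
  obtain ⟨c, hc0, hc1, hz⟩ := hz
  have z3 := hz l3
  have z4 := hz l4
  have z5 := hz l5
  have z6 := hz l6
  have z7 := hz l7
  have z8 := hz l8
  clear hz
  grind

/-- Sequences with small bound have triple form. -/
lemma triple_form {δ : ℕ → Fin 3} {γ : ℕ → Bool} {k : ℕ} (hk : 0 < k) (hp : ∀ i, δ (i + k) = δ i)
    (hnc : ∃ i, δ i ≠ δ (i + 1)) (g0 : γ 0 = true) (g1 : γ 1 = true) (g2 : γ 2 = false)
    (hb : ∀ n j, δ n ≠ j → toLex (sh (n + 1) (ind j δ)) ≤ toLex (T γ)) :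
    ∃ s b x, sh s δ = Tri b x := by
  have t0 := T_zero γ
  have t1 : T γ 1 = false := T_one γ 0
  have t2 : T γ 2 = true := by rw [← g0]; exact T_two γ 0
  have t3 : T γ 3 = false := by have := T_three γ 0; rw [g0] at this; exact this
  have t4 : T γ 4 = false := T_one γ 1
  have t5 : T γ 5 = true := by rw [← g1]; exact T_two γ 1
  have t6 : T γ 6 = false := by have := T_three γ 1; rw [g1] at this; exact this
  have t7 : T γ 7 = false := T_one γ 2
  have t8 : T γ 8 = false := by rw [← g2]; exact T_two γ 2
  have c0 : ∀ i, δ i ≠ δ (i + 1) → δ (i + 1) ≠ δ (i + 2) := by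
    intro i hi he
    refine not_lle_of 1 ?_ t1 ?_ (hb i _ hi)
    · intro r hr
      interval_cases r
      simp [sh, ind, t0]
    · simp [sh, ind, he]
  obtain ⟨i0, hi0⟩ := hnc
  have nr := nonrep_of hk hp c0 i0 hi0
  have lift : ∀ P : (ℕ → Fin 3) → Prop, (∀ n, P (sh (n + 1) δ)) → ∀ n, P (sh n δ) := by
    intro P hP n
    have : sh n δ = sh (n + (k - 1) + 1) δ := by
      funext r
      simp only [sh]
      rw [show n + (k - 1) + 1 + r = n + r + k by omega, hp]
    rw [this]; exact hP _
  have cc1 : ∀ n, ¬ (δ n = δ (n + 2) ∧ δ (n + 2) = δ (n + 4)) := by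
    refine lift (fun w => ¬ (w 0 = w 2 ∧ w 2 = w 4)) ?_
    rintro n ⟨h1, h2⟩
    simp only [sh, add_zero] at h1 h2
    have a1 := nr (n + 1)
    have a3 := nr (n + 1 + 2)
    refine not_lle_of 4 ?_ t4 ?_ (hb n _ (nr n))
    · intro r hr
      interval_cases r
      · simp [sh, ind, t0]
      · simpa [sh, ind, t1] using a1.symm
      · simpa [sh, ind, t2] using h1.symm
      · rw [← h1] at a3
        simpa [sh, ind, t3] using a3.symm
    · simp [sh, ind, h1, h2]
  have cc2 : ∀ n, ¬ (δ n = δ (n + 2) ∧ δ (n + 2) = δ (n + 5) ∧ δ (n + 5) = δ (n + 7)) := by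
    refine lift (fun w => ¬ (w 0 = w 2 ∧ w 2 = w 5 ∧ w 5 = w 7)) ?_
    rintro n ⟨h1, h2, h3⟩
    simp only [sh, add_zero] at h1 h2 h3
    have a1 := nr (n + 1)
    have a3 := nr (n + 1 + 2)
    have a4 := cc1 (n + 1)
    have a6 := nr (n + 1 + 5)
    refine not_lle_of 7 ?_ t7 ?_ (hb n _ (nr n))
    · intro r hr
      interval_cases r
      · simp [sh, ind, t0]
      · simpa [sh, ind, t1] using a1.symm
      · simpa [sh, ind, t2] using h1.symm
      · rw [← h1] at a3
        simpa [sh, ind, t3] using a3.symm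
      · simp only [sh, ind, t4]
        symm; rw [decide_eq_false_iff_not]
        intro h; exact a4 ⟨h1, by rw [h, h1]⟩
      · simp [sh, ind, t5, h1, h2]
      · rw [← h2, ← h1] at a6
        simpa [sh, ind, t6] using a6.symm
    · simp [sh, ind, h1, h2, h3]
  have cc3 : ∀ n, ¬ (δ n = δ (n + 2) ∧ δ (n + 2) = δ (n + 5) ∧ δ (n + 5) = δ (n + 8)) := by
    refine lift (fun w => ¬ (w 0 = w 2 ∧ w 2 = w 5 ∧ w 5 = w 8)) ?_
    rintro n ⟨h1, h2, h3⟩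
    simp only [sh, add_zero] at h1 h2 h3
    have a1 := nr (n + 1)
    have a3 := nr (n + 1 + 2)
    have a4 := cc1 (n + 1)
    have a6 := nr (n + 1 + 5)
    have a7 := cc2 (n + 1)
    refine not_lle_of 8 ?_ t8 ?_ (hb n _ (nr n))
    · intro r hr
      interval_cases r
      · simp [sh, ind, t0]
      · simpa [sh, ind, t1] using a1.symm
      · simpa [sh, ind, t2] using h1.symm
      · rw [← h1] at a3
        simpa [sh, ind, t3] using a3.symm
      · simp only [sh, ind, t4]
        symm; rw [decide_eq_false_iff_not]
        intro h; exact a4 ⟨h1, by rw [h, h1]⟩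
      · simp [sh, ind, t5, h1, h2]
      · rw [← h2, ← h1] at a6
        simpa [sh, ind, t6] using a6.symm
      · simp only [sh, ind, t7]
        symm; rw [decide_eq_false_iff_not]
        intro h; exact a7 ⟨h1, h2, by rw [h, h1, h2]⟩
    · simp [sh, ind, h1, h2, h3]
  have hsb : ∃ s b, ∀ i, δ (s + 3 * i) = b := by
    by_cases htn : ∃ p, δ p = δ (p + 2)
    · obtain ⟨p, hpt⟩ := htn
      have step : ∀ q, δ q = δ (q + 2) → δ (q + 4) = δ (q + 1) ∧
          (δ (q + 3) = δ (q + 5) ∨ (δ (q + 7) = δ (q + 1) ∧ δ (q + 6) = δ (q + 8))) := by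
        intro q hq
        exact wordcheck (δ q) (δ (q+1)) (δ (q+2)) (δ (q+3)) (δ (q+4)) (δ (q+5)) (δ (q+6)) (δ (q+7))
          (δ (q+8)) (nr q) (nr (q+1)) (nr (q+2)) (nr (q+3)) (nr (q+4)) (nr (q+5)) (nr (q+6))
          (nr (q+7)) (cc1 q) (cc1 (q+1)) (cc1 (q+4)) (cc2 q) (cc2 (q+1)) (cc3 q) hq
      refine ⟨p + 1, δ (p + 1), ?_⟩
      have main : ∀ n, δ (p + 3 * n + 1) = δ (p + 1) ∧ (δ (p + 3 * n) = δ (p + 3 * n + 2) ∨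
          (δ (p + 3 * n + 4) = δ (p + 1) ∧ δ (p + 3 * n + 3) = δ (p + 3 * n + 5))) := by
        intro n
        induction n with
        | zero => exact ⟨rfl, Or.inl hpt⟩
        | succ n ih =>
          obtain ⟨h1, h2⟩ := ih
          rw [show p + 3 * (n + 1) = p + 3 * n + 3 by ring]
          rcases h2 with h2 | ⟨h2, h3⟩
          · obtain ⟨s1, s2⟩ := step _ h2
            refine ⟨by rw [← h1]; exact s1, ?_⟩
            rcases s2 with s2 | ⟨s2, s3⟩
            · exact Or.inl s2
            · exact Or.inr ⟨by rw [← h1]; exact s2, s3⟩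
          · exact ⟨h2, Or.inl h3⟩
      intro i
      rw [show p + 1 + 3 * i = p + 3 * i + 1 by ring]
      exact (main i).1
    · push Not at htn
      refine ⟨0, δ 0, ?_⟩
      have h3 : ∀ q, δ (q + 3) = δ q := by
        intro q
        have n1 := nr q
        have n2 := nr (q + 1)
        have n3 := nr (q + 2)
        have n4 := htn q
        have n5 := htn (q + 1)
        simp only [show q + 1 + 1 = q + 2 by ring, show q + 2 + 1 = q + 3 by ring] at n2 n3 n5
        generalize δ q = a at *
        generalize δ (q + 1) = b at *
        generalize δ (q + 2) = c at *
        generalize δ (q + 3) = e at *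
        revert a b c e
        decide
      intro i
      induction i with
      | zero => rfl
      | succ i ih => rw [← ih]; exact h3 (0 + 3 * i)
  obtain ⟨s, b, hs⟩ := hsb
  have ex : ∀ u v b : Fin 3, b ≠ u → u ≠ v → v ≠ b →
      v = let3 b (decide (v = b + 2)) ∧ u = let3 b (!decide (v = b + 2)) := by decide
  have ex' : ∀ i, δ (s + 3 * i + 2) = let3 b (decide (δ (s + 3 * i + 2) = b + 2)) ∧
      δ (s + 3 * i + 1) = let3 b (!decide (δ (s + 3 * i + 2) = b + 2)) := by
    intro i
    apply ex
    · rw [← hs i]; exact nr _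
    · exact nr _
    · rw [← hs (i + 1)]; exact nr _
  refine ⟨s + 1, b, fun i => decide (δ (s + 3 * i + 2) = b + 2), ?_⟩
  funext n
  rcases mod3_cases n with ⟨i, rfl⟩ | ⟨i, rfl⟩ | ⟨i, rfl⟩
  · rw [Tri_zero, sh, show s + 1 + 3 * i = s + 3 * i + 1 by ring]; exact (ex' i).2
  · rw [Tri_one, sh, show s + 1 + (3 * i + 1) = s + 3 * i + 2 by ring]; exact (ex' i).1
  · rw [Tri_two, sh, show s + 1 + (3 * i + 2) = s + 3 * (i + 1) by ring]; exact hs _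

/-- Binary sequences bounded by `tau` have doubled form. -/
lemma double_form {x : ℕ → Bool} {k : ℕ} (hk : 0 < k) (hp : ∀ i, x (i + k) = x i)
    (hnc : ∃ i, x i ≠ x (i + 1)) (hb : ∀ i, toLex (yy x i) ≤ toLex tau) :
    ∃ s z, sh s x = Dd z := by
  have t0 := tau_zero
  have t1 := tau_one
  have t2 := tau_two
  have t3 : tau 3 = true := by
    show tm (2 * 2) = true
    rw [tm_even, tm_two]
  have t4 : tau 4 = false := by
    show tm (2 * 2 + 1) = false
    rw [tm_odd, tm_two]; rfl
  have t5 : tau 5 = false := by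
    show tm (2 * 3) = false
    rw [tm_even, tm_three]
  -- forbidden patterns
  have c1 : ∀ i, x i ≠ x (i + 1) → x (i + 1) = x (i + 2) → x (i + 2) ≠ x (i + 3) := by
    intro i h1 h2 h3
    refine not_lle_of 2 ?_ t2 ?_ (hb i)
    · intro r hr
      interval_cases r
      · simp only [t0, yy, add_zero]; revert h1; cases x i <;> cases x (i + 1) <;> simp
      · simp only [t1, yy]; rw [show i + 1 + 1 = i + 2 by ring, ← h2]
        revert h1; cases x i <;> cases x (i + 1) <;> simp
    · simp only [yy]; rw [show i + 1 + 2 = i + 3 by ring, ← h3, ← h2]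
      revert h1; cases x i <;> cases x (i + 1) <;> simp
  have c2 : ∀ i, x i ≠ x (i + 1) → x (i + 1) = x (i + 2) → x (i + 3) ≠ x (i + 4) →
      x (i + 4) ≠ x (i + 5) ∧ x (i + 5) = x (i + 6) := by
    intro i h1 h2 h34
    have h3 := c1 i h1 h2
    have e0 : yy x i 0 = true := by
      simp only [yy, add_zero]; revert h1; cases x i <;> cases x (i + 1) <;> simp
    have e1 : yy x i 1 = true := by
      simp only [yy]; rw [show i + 1 + 1 = i + 2 by ring, ← h2]
      revert h1; cases x i <;> cases x (i + 1) <;> simp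
    have e2 : yy x i 2 = false := by
      simp only [yy]; rw [show i + 1 + 2 = i + 3 by ring]
      rw [← h2] at h3
      revert h1 h3; cases x i <;> cases x (i + 1) <;> cases x (i + 3) <;> simp
    have e3 : yy x i 3 = true := by
      simp only [yy] at e2 ⊢; rw [show i + 1 + 2 = i + 3 by ring] at e2
      rw [show i + 1 + 3 = i + 4 by ring]
      revert e2 h34; cases x i <;> cases x (i + 3) <;> cases x (i + 4) <;> simp
    have e4 : yy x i 4 = false := by
      by_contra hc
      refine not_lle_of 4 ?_ t4 (by simpa using hc) (hb i)
      intro r hr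
      interval_cases r
      · rw [t0, e0]
      · rw [t1, e1]
      · rw [t2, e2]
      · rw [t3, e3]
    have e5 : yy x i 5 = false := by
      by_contra hc
      refine not_lle_of 5 ?_ t5 (by simpa using hc) (hb i)
      intro r hr
      interval_cases r
      · rw [t0, e0]
      · rw [t1, e1]
      · rw [t2, e2]
      · rw [t3, e3]
      · rw [t4, e4]
    simp only [yy] at e3 e4 e5
    rw [show i + 1 + 3 = i + 4 by ring] at e3
    rw [show i + 1 + 4 = i + 5 by ring] at e4
    rw [show i + 1 + 5 = i + 6 by ring] at e5
    revert e3 e4 e5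
    cases x i <;> cases x (i + 4) <;> cases x (i + 5) <;> cases x (i + 6) <;> simp
  have hpairs : ∃ s, ∀ i, x (s + 2 * i) ≠ x (s + 2 * i + 1) := by
    by_cases hd : ∃ i, x i ≠ x (i + 1) ∧ x (i + 1) = x (i + 2)
    · obtain ⟨q, hq1, hq2⟩ := hd
      refine ⟨q, ?_⟩
      have main : ∀ n, x (q + 2 * n) ≠ x (q + 2 * n + 1) ∧
          (x (q + 2 * n + 1) = x (q + 2 * n + 2) ∨
            (x (q + 2 * n + 2) ≠ x (q + 2 * n + 3) ∧ x (q + 2 * n + 3) = x (q + 2 * n + 4))) := by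
        intro n
        induction n with
        | zero => exact ⟨hq1, Or.inl hq2⟩
        | succ n ih =>
          rw [show q + 2 * (n + 1) = q + 2 * n + 2 by ring]
          obtain ⟨h1, h2 | ⟨h2, h3⟩⟩ := ih
          · refine ⟨c1 _ h1 h2, ?_⟩
            by_cases h34 : x (q + 2 * n + 3) = x (q + 2 * n + 4)
            · exact Or.inl h34
            · exact Or.inr (c2 _ h1 h2 h34)
          · exact ⟨h2, Or.inl h3⟩
      exact fun i => (main i).1
    · push Not at hd
      obtain ⟨i0, hi0⟩ := hnc
      exact ⟨0, fun i => nonrep_of hk hp hd i0 hi0 _⟩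
  obtain ⟨s, hs⟩ := hpairs
  refine ⟨s, fun i => x (s + 2 * i + 1), ?_⟩
  funext n
  rcases Nat.even_or_odd' n with ⟨i, rfl | rfl⟩
  · rw [Dd_even, sh]
    have := hs i
    revert this
    cases x (s + 2 * i) <;> cases x (s + 2 * i + 1) <;> simp
  · rw [Dd_odd, sh]; rfl

/-- A sequence bounded by `tau` with period `q 2^n`, `q` odd, has period `2^n`. -/
lemma tau_period (q : ℕ) (hq : q % 2 = 1) (n : ℕ) : ∀ x : ℕ → Bool,
    (∀ i, x (i + q * 2 ^ n) = x i) → (∀ i, toLex (yy x i) ≤ toLex tau) →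
    ∀ i, x (i + 2 ^ n) = x i := by
  induction n with
  | zero =>
    intro x hp hb
    rw [pow_zero, mul_one] at hp
    by_contra hc
    push Not at hc
    obtain ⟨i, hi⟩ := hc
    have hq0 : 0 < q := by omega
    obtain ⟨s, z, hz⟩ := double_form hq0 hp ⟨i, fun e => hi (by simpa using e.symm)⟩ hb
    have hz' : ∀ i, x (s + i) = Dd z i := fun i => by rw [← hz]; rfl
    -- `x (s+2j) ≠ x (s+2j+1)`, and shifting by `q`
    have pr : ∀ j, x (s + 2 * j) ≠ x (s + 2 * j + 1) := by
      intro j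
      rw [hz', add_assoc, hz', Dd_even, Dd_odd]; simp
    have alt : ∀ j, x (s + j) ≠ x (s + j + 1) := by
      intro j
      rcases Nat.even_or_odd' j with ⟨c, rfl | rfl⟩
      · exact pr c
      · have hh := pr (c + (q + 1) / 2)
        have e : s + 2 * (c + (q + 1) / 2) = s + (2 * c + 1) + q := by omega
        rw [e, hp, show s + (2 * c + 1) + q + 1 = s + (2 * c + 1) + 1 + q by ring, hp] at hh
        exact hh
    have alt2 : ∀ j, x (s + 2 * j) = x s := by
      intro j
      induction j with
      | zero => rfl
      | succ j ih =>
        have a1 := alt (2 * j)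
        have a2 := alt (2 * j + 1)
        rw [← ih, show s + 2 * (j + 1) = s + (2 * j + 1) + 1 by ring]
        rw [show s + 2 * j + 1 = s + (2 * j + 1) by ring] at a1
        revert a1 a2
        cases x (s + 2 * j) <;> cases x (s + (2 * j + 1)) <;> cases x (s + (2 * j + 1) + 1) <;> simp
    have f1 := alt2 ((q + 1) / 2)
    rw [show s + 2 * ((q + 1) / 2) = s + 1 + q by omega, hp] at f1
    exact alt 0 f1.symm
  | succ n ih =>
    intro x hp hb
    by_cases hnc : ∃ i, x i ≠ x (i + 1)
    swap
    · push Not at hnc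
      have hc : ∀ i, x i = x 0 := by
        intro i
        induction i with
        | zero => rfl
        | succ i ih => rw [← hnc, ih]
      intro i
      rw [hc, hc i]
    have hk : 0 < q * 2 ^ (n + 1) := by
      have : 0 < q := by omega
      positivity
    obtain ⟨s, z, hz⟩ := double_form hk hp hnc hb
    have hz' : ∀ i, x (s + i) = Dd z i := fun i => by rw [← hz]; rfl
    have hy : ∀ i, yy (Dd z) i = yy x (s + i) := by
      intro i; rw [← hz]; funext j; simp [yy, sh, add_assoc]
    have hzb : ∀ i, toLex (yy z i) ≤ toLex tau := by
      intro i
      rw [← R_le_iff, ← yy_Dd_even, R_tau, hy]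
      exact hb _
    have hzp : ∀ i, z (i + q * 2 ^ n) = z i := by
      intro i
      have := hp (s + (2 * i + 1))
      rw [hz', Dd_odd, add_assoc, hz',
        show 2 * i + 1 + q * 2 ^ (n + 1) = 2 * (i + q * 2 ^ n) + 1 by ring, Dd_odd] at this
      exact this
    have hz2 := ih z hzp hzb
    apply per_of_sh hk hp (s := s)
    intro i
    rw [hz]
    rcases Nat.even_or_odd' i with ⟨c, rfl | rfl⟩
    · rw [show 2 * c + 2 ^ (n + 1) = 2 * (c + 2 ^ n) by ring, Dd_even, Dd_even, hz2]
    · rw [show 2 * c + 1 + 2 ^ (n + 1) = 2 * (c + 2 ^ n) + 1 by ring, Dd_odd, Dd_odd, hz2]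

lemma Tri_per {b : Fin 3} {x : ℕ → Bool} {p : ℕ} (h : ∀ i, x (i + p) = x i) (i : ℕ) :
    Tri b x (i + 3 * p) = Tri b x i := by
  rcases mod3_cases i with ⟨c, rfl⟩ | ⟨c, rfl⟩ | ⟨c, rfl⟩
  · rw [show 3 * c + 3 * p = 3 * (c + p) by ring, Tri_zero, Tri_zero, h]
  · rw [show 3 * c + 1 + 3 * p = 3 * (c + p) + 1 by ring, Tri_one, Tri_one, h]
  · rw [show 3 * c + 2 + 3 * p = 3 * (c + p) + 2 by ring, Tri_two, Tri_two]

lemma per_of_Tri {b : Fin 3} {x : ℕ → Bool} {j : ℕ} (h : ∀ i, Tri b x (i + j) = Tri b x i) :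
    ∃ p, j = 3 * p ∧ ∀ i, x (i + p) = x i := by
  rcases mod3_cases j with ⟨c, rfl⟩ | ⟨c, rfl⟩ | ⟨c, rfl⟩
  · refine ⟨c, rfl, fun i => ?_⟩
    have := h (3 * i + 1)
    rw [show 3 * i + 1 + 3 * c = 3 * (i + c) + 1 by ring, Tri_one, Tri_one, let3_inj] at this
    exact this
  · have := h (3 * 0 + 2)
    rw [show 3 * 0 + 2 + (3 * c + 1) = 3 * (c + 1) by ring, Tri_zero, Tri_two] at this
    exact absurd this (let3_ne _ _)
  · have := h (3 * 0 + 2)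
    rw [show 3 * 0 + 2 + (3 * c + 2) = 3 * (c + 1) + 1 by ring, Tri_one, Tri_two] at this
    exact absurd this (let3_ne _ _)

lemma sp_Tri {b : Fin 3} {x : ℕ → Bool} {p : ℕ} (h : SmallestPeriod x p) :
    SmallestPeriod (Tri b x) (3 * p) := by
  refine ⟨by have := h.1; omega, Tri_per h.2.1, ?_⟩
  intro j hj hjp
  by_contra hc
  push Not at hc
  obtain ⟨r, rfl, hr⟩ := per_of_Tri hc
  obtain ⟨i, hi⟩ := h.2.2 r (by omega) (by omega)
  exact hi (hr i)

lemma sp_of_Tri {δ : ℕ → Fin 3} {b : Fin 3} {x : ℕ → Bool} {p s : ℕ} (hs : sh s δ = Tri b x)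
    (h : SmallestPeriod δ (3 * p)) : SmallestPeriod x p := by
  have hp : ∀ i, Tri b x (i + 3 * p) = Tri b x i := by
    intro i
    rw [← hs]; simp only [sh]; rw [← add_assoc, h.2.1]
  obtain ⟨r, hr, hx⟩ := per_of_Tri hp
  have : r = p := by omega
  subst this
  refine ⟨by have := h.1; omega, hx, ?_⟩
  intro j hj hjp
  by_contra hc
  push Not at hc
  obtain ⟨i, hi⟩ := h.2.2 (3 * j) (by omega) (by omega)
  refine hi (per_of_sh h.1 h.2.1 (s := s) ?_ i)
  rw [hs]
  exact Tri_per hc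

lemma sp_Dd {x : ℕ → Bool} {p : ℕ} (h : SmallestPeriod x p) (hp : 2 ≤ p) :
    SmallestPeriod (Dd x) (2 * p) := by
  refine ⟨by omega, ?_, ?_⟩
  · intro i
    rcases Nat.even_or_odd' i with ⟨c, rfl | rfl⟩
    · rw [show 2 * c + 2 * p = 2 * (c + p) by ring, Dd_even, Dd_even, h.2.1]
    · rw [show 2 * c + 1 + 2 * p = 2 * (c + p) + 1 by ring, Dd_odd, Dd_odd, h.2.1]
  · intro j hj hjp
    by_contra hc
    push Not at hc
    rcases Nat.even_or_odd' j with ⟨r, rfl | rfl⟩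
    · obtain ⟨i, hi⟩ := h.2.2 r (by omega) (by omega)
      have := hc (2 * i + 1)
      rw [show 2 * i + 1 + 2 * r = 2 * (i + r) + 1 by ring, Dd_odd, Dd_odd] at this
      exact hi this
    · have h1 : ∀ i, x (i + r) = !x i := by
        intro i
        have := hc (2 * i)
        rw [show 2 * i + (2 * r + 1) = 2 * (i + r) + 1 by ring, Dd_odd, Dd_even] at this
        exact this
      have h2 : ∀ i, (!x (i + r + 1)) = x i := by
        intro i
        have := hc (2 * i + 1)
        rw [show 2 * i + 1 + (2 * r + 1) = 2 * (i + r + 1) by ring, Dd_odd, Dd_even] at this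
        exact this
      obtain ⟨i, hi⟩ := h.2.2 1 (by omega) (by omega)
      apply hi
      have a := h1 (i + 1)
      have b := h2 i
      rw [show i + 1 + r = i + r + 1 by ring] at a
      rw [a] at b
      simpa using b

/-- Starting bound `110111…`. -/
def alpha0 : ℕ → Bool := fun i => decide (i ≠ 2)

/-- Starting sequence `(1 (10)^m)^∞`. -/
def xstart (m : ℕ) : ℕ → Bool := fun i =>
  decide (i % (2 * m + 1) = 0) || decide (i % (2 * m + 1) % 2 = 1)

lemma xstart_sp (m : ℕ) (hm : 1 ≤ m) : SmallestPeriod (xstart m) (2 * m + 1) := by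
  refine ⟨by omega, fun i => by simp [xstart], ?_⟩
  intro j hj hjm
  by_contra hc
  push Not at hc
  have h0 := hc 0
  have h1 := hc 1
  have e1 : 1 % (2 * m + 1) = 1 := Nat.mod_eq_of_lt (by omega)
  have e2 : j % (2 * m + 1) = j := Nat.mod_eq_of_lt hjm
  simp only [xstart, zero_add, Nat.zero_mod, e1, e2] at h0 h1
  by_cases hj' : 1 + j = 2 * m + 1
  · have : j = 2 * m := by omega
    subst this
    simp at h0
    omega
  · rw [Nat.mod_eq_of_lt (show 1 + j < 2 * m + 1 by omega)] at h1
    simp at h0 h1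
    omega

lemma xstart_bound (m : ℕ) (hm : 1 ≤ m) (i : ℕ) :
    toLex (yy (xstart m) i) ≤ toLex alpha0 := by
  have key : ∀ i, ¬ (xstart m i = xstart m (i + 1) ∧ xstart m (i + 1) = xstart m (i + 2)) := by
    intro i
    have hr : i % (2 * m + 1) < 2 * m + 1 := Nat.mod_lt _ (by omega)
    have s1 : ∀ i, (i + 1) % (2 * m + 1) =
        if i % (2 * m + 1) = 2 * m then 0 else i % (2 * m + 1) + 1 := by
      intro i
      have hr : i % (2 * m + 1) < 2 * m + 1 := Nat.mod_lt _ (by omega)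
      rw [Nat.add_mod, show 1 % (2 * m + 1) = 1 from Nat.mod_eq_of_lt (by omega)]
      split_ifs with h
      · rw [h]; simp
      · exact Nat.mod_eq_of_lt (by omega)
    have a1 := s1 i
    have a2 := s1 (i + 1)
    rw [show i + 1 + 1 = i + 2 by ring] at a2
    simp only [xstart]
    generalize i % (2 * m + 1) = r at *
    generalize (i + 1) % (2 * m + 1) = r1 at *
    generalize (i + 2) % (2 * m + 1) = r2 at *
    rintro ⟨h1, h2⟩
    rw [Bool.eq_iff_iff] at h1 h2
    simp only [Bool.or_eq_true, decide_eq_true_eq] at h1 h2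
    split_ifs at a1 a2 <;> omega
  apply le_of_not_gt
  intro hlt
  obtain ⟨n, h1, h2, h3⟩ := (llt_iff _ _).1 hlt
  have hn : n = 2 := by simpa [alpha0] using h2
  subst hn
  have y0 := h1 0 (by omega)
  have y1 := h1 1 (by omega)
  have y2 := h3
  simp only [alpha0, yy, add_zero] at y0 y1 y2
  have := key (i + 1)
  rw [show i + 1 + 1 = i + 2 by ring, show i + 1 + 2 = i + 3 by ring] at *
  revert this y0 y1 y2
  cases xstart m i <;> cases xstart m (i + 1) <;> cases xstart m (i + 2) <;>
    cases xstart m (i + 3) <;> simp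

lemma exists_x (m : ℕ) (hm : 1 ≤ m) (n : ℕ) : ∃ x : ℕ → Bool,
    SmallestPeriod x ((2 * m + 1) * 2 ^ n) ∧ ∀ i, toLex (yy x i) ≤ toLex (R^[n] alpha0) := by
  induction n with
  | zero => exact ⟨xstart m, by simpa using xstart_sp m hm, fun i => xstart_bound m hm i⟩
  | succ n ih =>
    obtain ⟨x, h1, h2⟩ := ih
    refine ⟨Dd x, ?_, ?_⟩
    · have := sp_Dd h1 (by have : 1 ≤ 2 ^ n := Nat.one_le_two_pow
                           nlinarith)
      rwa [show 2 * ((2 * m + 1) * 2 ^ n) = (2 * m + 1) * 2 ^ (n + 1) by ring] at this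
    · intro i
      rw [Function.iterate_succ_apply']
      exact yy_Dd_le h2 (Riter_zero rfl n) i

lemma Riter_alpha0 (n : ℕ) : (R^[n] alpha0) 0 = true ∧ (R^[n] alpha0) 1 = true ∧
    (R^[n] alpha0) 2 = false := by
  cases n with
  | zero => simp [alpha0]
  | succ n =>
    have h := Riter_zero (α := alpha0) rfl n
    rw [Function.iterate_succ_apply']
    refine ⟨R_zero _, ?_, ?_⟩
    · rw [← h]; exact R_odd _ 0
    · have := R_even (R^[n] alpha0) 0
      rw [h] at this; exact this

lemma R_lt_self {ν : ℕ → Bool} (h : toLex tau < toLex ν) : toLex (R ν) < toLex ν := by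
  by_contra hc
  have hc' : toLex ν ≤ toLex (R ν) := not_lt.1 hc
  refine absurd h (not_lt.2 (lle_of_limit fun n => ⟨R^[n] ν, ?_, Riter_agree ν n⟩))
  induction n with
  | zero => exact le_refl _
  | succ n ih =>
    rw [Function.iterate_succ_apply']
    exact hc'.trans (R_le ih)

/-! ### The sequence `λ` -/

lemma tm_pow_add (n : ℕ) : ∀ i < 2 ^ n, tm (2 ^ n + i) = !tm i := by
  induction n with
  | zero => intro i hi; have : i = 0 := by simpa using hi
            subst this; simp [tm_zero, tm_one]
  | succ n ih =>
    intro i hi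
    rw [pow_succ] at hi
    rcases Nat.even_or_odd' i with ⟨c, rfl | rfl⟩
    · rw [show 2 ^ (n + 1) + 2 * c = 2 * (2 ^ n + c) by ring, tm_even, tm_even, ih c (by omega)]
    · rw [show 2 ^ (n + 1) + (2 * c + 1) = 2 * (2 ^ n + c) + 1 by ring, tm_odd, tm_odd,
        ih c (by omega)]

lemma Ttau_zero (i : ℕ) : T tau (3 * i) = tm (2 * i + 1) := by
  rcases i with _ | i
  · rw [Nat.mul_zero, T_zero]; simp [tm_one]
  · rw [show 3 * (i + 1) = 3 * i + 3 by ring, T_three, tm_odd, tau]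
lemma Ttau_two (i : ℕ) : T tau (3 * i + 2) = tm (2 * i + 2) := by
  rw [T_two, show 2 * i + 2 = 2 * (i + 1) by ring, tm_even, tau]

lemma tm_pow (n : ℕ) : tm (2 ^ n) = true := by
  have := tm_pow_add n 0 (by positivity)
  simpa [tm_zero] using this

lemma plus_length (n : ℕ) : (tB n).length = 3 * 2 ^ n ∧
    plusBlock (tB n) = (List.range (3 * 2 ^ n)).map fun i => (T tau i).toNat := by
  induction n with
  | zero =>
    refine ⟨rfl, ?_⟩
    have e0 : T tau 0 = true := T_zero _
    have e1 : T tau 1 = false := T_one _ 0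
    have e2 : T tau 2 = true := by rw [← tau_zero]; exact T_two _ 0
    simp [List.range_succ, plusBlock, tB, e0, e1, e2]
  | succ n ih =>
    obtain ⟨hl, hp⟩ := ih
    have hpl : (plusBlock (tB n)).length = 3 * 2 ^ n := by rw [hp]; simp
    have hlen : (tB (n + 1)).length = 3 * 2 ^ (n + 1) := by
      simp only [tB, thetaBlock, List.length_append, List.length_mapIdx, hpl]; ring
    have hpos : 1 ≤ 2 ^ n := Nat.one_le_two_pow
    refine ⟨hlen, ?_⟩
    apply List.ext_getElem
    · simp [plusBlock, hlen]
      rw [pow_succ]; omega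
    intro i h1 h2
    simp only [List.length_map, List.length_range] at h2
    simp only [List.getElem_map, List.getElem_range]
    by_cases hlast : i = 3 * 2 ^ (n + 1) - 1
    · have : (tB (n + 1)).dropLast.length = i := by simp [hlen, hlast]
      simp only [plusBlock]
      rw [List.getElem_append_right (by omega)]
      have e : i = 3 * (2 ^ (n + 1) - 1) + 2 := by rw [pow_succ] at *; omega
      have e2 : 2 * (2 ^ (n + 1) - 1) + 2 = 2 ^ (n + 2) := by
        rw [pow_succ, pow_succ]; omega
      have ht : T tau i = true := by rw [e, Ttau_two, e2, tm_pow]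
      rw [ht]; simp
    · simp only [plusBlock]
      rw [List.getElem_append_left (by simp [hlen]; omega), List.getElem_dropLast]
      simp only [tB]
      by_cases hi : i < 3 * 2 ^ n
      · rw [List.getElem_append_left (by rw [hpl]; exact hi)]
        simp [hp]
      · obtain ⟨r, rfl⟩ := Nat.exists_eq_add_of_le (not_lt.1 hi)
        rw [List.getElem_append_right (by rw [hpl]; omega)]
        simp only [thetaBlock, List.getElem_mapIdx, hp, List.getElem_map, List.getElem_range,
          List.length_map, List.length_range, Nat.add_sub_cancel_left]
        have hr : r < 3 * 2 ^ n - 1 := by rw [pow_succ] at *; omega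
        rcases mod3_cases r with ⟨c, rfl⟩ | ⟨c, rfl⟩ | ⟨c, rfl⟩
        · rw [if_neg (by omega), show 3 * 2 ^ n + 3 * c = 3 * (2 ^ n + c) by ring, Ttau_zero,
            Ttau_zero, show 2 * (2 ^ n + c) + 1 = 2 ^ (n + 1) + (2 * c + 1) by ring,
            tm_pow_add _ _ (by rw [pow_succ]; omega)]
          cases tm (2 * c + 1) <;> rfl
        · rw [if_pos (by omega), show 3 * 2 ^ n + (3 * c + 1) = 3 * (2 ^ n + c) + 1 by ring, T_one,
            T_one]
        · rw [if_neg (by omega), show 3 * 2 ^ n + (3 * c + 2) = 3 * (2 ^ n + c) + 2 by ring,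
            Ttau_two, Ttau_two, show 2 * (2 ^ n + c) + 2 = 2 ^ (n + 1) + (2 * c + 2) by ring,
            tm_pow_add _ _ (by rw [pow_succ]; omega)]
          cases tm (2 * c + 2) <;> rfl

lemma lamSeq_eq (i : ℕ) : lamSeq i = (T tau i).toNat := by
  obtain ⟨hl, hp⟩ := plus_length i
  have hi : i < 3 * 2 ^ i := by
    have : i < 2 ^ i := Nat.lt_two_pow_self
    omega
  have hpl : (plusBlock (tB i)).length = 3 * 2 ^ i := by rw [hp]; simp
  have hlt : i < (plusBlock (tB i)).length := by omega
  simp only [lamSeq, tB]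
  rw [List.getD_append _ _ _ _ hlt, List.getD_eq_getElem _ _ hlt]
  simp [hp]
/-! ### Values of binary sequences -/

/-- Value of a binary sequence in base `β`. -/
def V (β : ℝ) (a : ℕ → Bool) : ℝ := ∑' i, ((a i).toNat : ℝ) / β ^ (i + 1)

lemma bn_le (c : Bool) : (c.toNat : ℝ) ≤ 1 := by cases c <;> simp

lemma geo_hasSum {β : ℝ} (h : 1 < β) : HasSum (fun i : ℕ => 1 / β ^ (i + 1)) (1 / (β - 1)) := by
  have h0 : 0 < β := by linarith
  have h1 : β - 1 ≠ 0 := by linarith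
  have := (hasSum_geometric_of_lt_one (r := β⁻¹) (by positivity) (inv_lt_one_of_one_lt₀ h)).mul_left β⁻¹
  have e1 : (fun i : ℕ => 1 / β ^ (i + 1)) = fun i => β⁻¹ * β⁻¹ ^ i := by
    funext i
    rw [pow_succ, inv_pow]; field_simp
  have e2 : 1 / (β - 1) = β⁻¹ * (1 - β⁻¹)⁻¹ := by
    rw [← mul_inv, mul_sub, mul_one, mul_inv_cancel₀ h0.ne', one_div]
  rw [e1, e2]; exact this

lemma V_summable {β : ℝ} (h : 1 < β) (a : ℕ → Bool) :
    Summable fun i => ((a i).toNat : ℝ) / β ^ (i + 1) := by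
  have h0 : 0 < β := by linarith
  refine Summable.of_nonneg_of_le (fun i => by positivity) (fun i => ?_) (geo_hasSum h).summable
  gcongr
  exact bn_le _

lemma V_nonneg {β : ℝ} (h : 1 < β) (a : ℕ → Bool) : 0 ≤ V β a := by
  have h0 : 0 < β := by linarith
  exact tsum_nonneg fun i => by positivity

lemma V_le {β : ℝ} (h : 1 < β) (a : ℕ → Bool) : V β a ≤ 1 / (β - 1) := by
  have h0 : 0 < β := by linarith
  rw [← (geo_hasSum h).tsum_eq]
  refine (V_summable h a).tsum_le_tsum (fun i => ?_) (geo_hasSum h).summable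
  gcongr
  exact bn_le _

lemma V_split {β : ℝ} (h : 1 < β) (a : ℕ → Bool) (n : ℕ) :
    V β a = ∑ i ∈ Finset.range n, ((a i).toNat : ℝ) / β ^ (i + 1) + (β ^ n)⁻¹ * V β (sh n a) := by
  have h0 : 0 < β := by linarith
  unfold V
  rw [← (V_summable h a).sum_add_tsum_nat_add n, ← tsum_mul_left]
  congr 1
  refine tsum_congr fun i => ?_
  rw [sh, add_comm n i, show i + n + 1 = n + (i + 1) by ring, pow_add]
  field_simp

lemma V_scale {β β' : ℝ} (h : 1 < β) (h' : β ≤ β') (a : ℕ → Bool) : V β' a ≤ β / β' * V β a := by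
  have h0 : 0 < β := by linarith
  have h0' : 0 < β' := by linarith
  unfold V
  rw [← tsum_mul_left]
  refine (V_summable (h.trans_le h') a).tsum_le_tsum (fun i => ?_) ((V_summable h a).mul_left _)
  have e : β / β' * (((a i).toNat : ℝ) / β ^ (i + 1)) = ((a i).toNat : ℝ) / (β ^ i * β') := by
    rw [pow_succ]; field_simp
  rw [e, pow_succ]
  gcongr

lemma V_anti {β β' : ℝ} (h : 1 < β) (h' : β ≤ β') (a : ℕ → Bool) : V β' a ≤ V β a := by
  have := V_scale h h' a
  have h2 : β / β' ≤ 1 := (div_le_one (by linarith)).2 h'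
  nlinarith [V_nonneg h a]

lemma V_strict {β β' : ℝ} (h : 1 < β) (h' : β < β') {a : ℕ → Bool} (ha : V β a ≤ 1) :
    V β' a < 1 := by
  have := V_scale h h'.le a
  have h2 : β / β' < 1 := (div_lt_one (by linarith)).2 h'
  have h3 : 0 ≤ β / β' := div_nonneg (by linarith) (by linarith)
  nlinarith [V_nonneg h a]

lemma V_lex {β : ℝ} (h : 1 < β) {a α : ℕ → Bool} (ha : toLex a < toLex α) :
    ∃ n, V β a + (β ^ (n + 1))⁻¹ * (1 - V β (sh (n + 1) a)) ≤ V β α := by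
  have h0 : 0 < β := by linarith
  obtain ⟨n, h1, h2, h3⟩ := (llt_iff _ _).1 ha
  refine ⟨n, ?_⟩
  rw [V_split h a (n + 1), V_split h α (n + 1), Finset.sum_range_succ, Finset.sum_range_succ, h2, h3,
    Finset.sum_congr rfl (fun i hi => by rw [h1 i (Finset.mem_range.1 hi)])]
  have : 0 ≤ (β ^ (n + 1))⁻¹ * V β (sh (n + 1) α) := mul_nonneg (by positivity) (V_nonneg h _)
  simp only [Bool.toNat_false, Bool.toNat_true, Nat.cast_zero, Nat.cast_one, zero_div, one_div]
  linarith

lemma V_K {β : ℝ} (h : 1 < β) {a α : ℕ → Bool} (hα : V β α ≤ 1)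
    (ha : ∀ n, toLex (sh n a) ≤ toLex α) (n : ℕ) : V β (sh n a) ≤ 1 := by
  have h0 : 0 < β := by linarith
  have hbd : BddAbove (range fun n => V β (sh n a)) := ⟨1 / (β - 1), by
    rintro _ ⟨n, rfl⟩; exact V_le h _⟩
  set s := ⨆ n, V β (sh n a) with hs
  have hle : ∀ n, V β (sh n a) ≤ s := fun n => le_ciSup hbd n
  refine (hle n).trans ?_
  by_contra hcon
  push Not at hcon
  have hb : β⁻¹ < 1 := inv_lt_one_of_one_lt₀ h
  have hkey : ∀ n, V β (sh n a) ≤ 1 + β⁻¹ * (s - 1) := by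
    intro n
    have hp : 0 ≤ β⁻¹ * (s - 1) := mul_nonneg (by positivity) (by linarith)
    rcases (ha n).eq_or_lt with e | l
    · rw [toLex.injective e]; linarith
    · obtain ⟨t, ht⟩ := V_lex h l
      have e : sh (t + 1) (sh n a) = sh (n + (t + 1)) a := by
        funext i; simp [sh, add_assoc]
      rw [e] at ht
      have h1 := hle (n + (t + 1))
      have h2 : (β ^ (t + 1))⁻¹ ≤ β⁻¹ := by
        apply inv_anti₀ h0
        exact le_self_pow₀ h.le (by omega)
      have h3 : 0 < (β ^ (t + 1))⁻¹ := by positivity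
      nlinarith
  have := ciSup_le hkey
  nlinarith

lemma sh_sh {α : Type*} (m n : ℕ) (a : ℕ → α) : sh m (sh n a) = sh (n + m) a := by
  funext i; simp [sh, add_assoc]

lemma sh_zero {α : Type*} (a : ℕ → α) : sh 0 a = a := by
  funext i; simp [sh]

lemma V_Q {b : ℝ} (hb : 1 < b) {α' α : ℕ → Bool} (hl : toLex α' < toLex α)
    (hinf : ∀ N, ∃ i, N ≤ i ∧ α i = true) (hα : V b α ≤ 1) :
    ∃ β, 1 < β ∧ β < b ∧ ∃ α'' : ℕ → Bool, toLex α' ≤ toLex α'' ∧ V β α'' ≤ 1 := by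
  obtain ⟨n, h1, h2, h3⟩ := (llt_iff _ _).1 hl
  set f : ℝ → ℝ := fun β => ∑ i ∈ Finset.range (n + 1), ((α i).toNat : ℝ) / β ^ (i + 1) with hf
  have hb0 : 0 < b := by linarith
  have hfb : f b < 1 := by
    obtain ⟨i, hi, hti⟩ := hinf (n + 1)
    obtain ⟨r, rfl⟩ := Nat.exists_eq_add_of_le hi
    refine lt_of_lt_of_le ?_ hα
    rw [V_split hb α (n + 1)]
    have h4 : 0 < V b (sh (n + 1) α) := by
      unfold V
      refine (V_summable hb _).tsum_pos (fun i => by positivity) r ?_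
      simp only [sh, hti]
      simp; positivity
    have : 0 < (b ^ (n + 1))⁻¹ * V b (sh (n + 1) α) := by positivity
    simp only [hf]; linarith
  have hc : ContinuousAt f b := by
    have : ∀ i : ℕ, b ^ (i + 1) ≠ 0 := fun i => by positivity
    simp only [hf]
    refine tendsto_finsetSum _ fun i _ => ?_
    exact ContinuousAt.div continuousAt_const (continuousAt_id.pow _) (this i)
  have hev : ∀ᶠ β in nhdsWithin b (Iio b), f β < 1 ∧ 1 < β ∧ β < b := by
    filter_upwards [nhdsWithin_le_nhds (hc.eventually_lt continuousAt_const hfb),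
      nhdsWithin_le_nhds (lt_mem_nhds hb), self_mem_nhdsWithin] with β g1 g2 g3
    exact ⟨g1, g2, g3⟩
  obtain ⟨β, hb1, hb2, hb3⟩ := hev.exists
  refine ⟨β, hb2, hb3, fun i => if i < n + 1 then α i else false, ?_, ?_⟩
  · refine le_of_lt ((llt_iff _ _).2 ⟨n, fun i hi => ?_, h2, by simp [h3]⟩)
    rw [if_pos (by omega), h1 i hi]
  · rw [V_split hb2 _ (n + 1)]
    have e : V β (sh (n + 1) fun i => if i < n + 1 then α i else false) = 0 := by
      unfold V sh
      rw [← tsum_zero (α := ℝ) (β := ℕ)]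
      refine tsum_congr fun i => ?_
      beta_reduce
      rw [if_neg (by omega)]; simp
    rw [e, mul_zero, add_zero, Finset.sum_congr rfl
      (fun i hi => by rw [if_pos (Finset.mem_range.1 hi)])]
    exact hb1.le

/-! ### The overlap region -/

/-- The three digits. -/
def ee (j : Fin 3) : ℝ × ℝ := if j = 0 then (0, 0) else if j = 1 then (1, 0) else (0, 1)

lemma ee_inj {i j : Fin 3} (h : ee i = ee j) : i = j := by
  fin_cases i <;> fin_cases j <;> simp_all [ee]

lemma ee_mem (j : Fin 3) : ee j ∈ OmegaR := by
  fin_cases j <;> simp [ee, OmegaR]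

lemma exists_ee {p : ℝ × ℝ} (h : p ∈ OmegaR) : ∃ j, ee j = p := by
  simp only [OmegaR, mem_insert_iff, mem_singleton_iff] at h
  rcases h with rfl | rfl | rfl
  · exact ⟨0, by simp [ee]⟩
  · exact ⟨1, by simp [ee]⟩
  · exact ⟨2, by simp [ee]⟩

lemma pt_eq {β : ℝ} (h : 1 < β) (δ : ℕ → Fin 3) :
    ∑' i : ℕ, (β ^ (i + 1))⁻¹ • ee (δ i) = (V β (ind 1 δ), V β (ind 2 δ)) := by
  have h1 := (V_summable h (ind 1 δ)).hasSum
  have h2 := (V_summable h (ind 2 δ)).hasSum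
  have h3 := h1.prodMk h2
  refine HasSum.tsum_eq ?_
  change HasSum _ (V β (ind 1 δ), V β (ind 2 δ)) at h3
  convert h3 using 1
  funext i
  simp only [ind]
  generalize δ i = c
  fin_cases c <;> simp [ee]

lemma V_sum {β : ℝ} (h : 1 < β) (δ : ℕ → Fin 3) :
    V β (ind 0 δ) + V β (ind 1 δ) + V β (ind 2 δ) = 1 / (β - 1) := by
  have h0 := (V_summable h (ind 0 δ)).hasSum
  have h1 := (V_summable h (ind 1 δ)).hasSum
  have h2 := (V_summable h (ind 2 δ)).hasSum
  have h3 := (h0.add h1).add h2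
  refine h3.unique ?_
  convert geo_hasSum h using 1
  funext i
  simp only [ind]
  generalize δ i = c
  fin_cases c <;> simp

lemma V_true {β : ℝ} (h : 1 < β) : V β (fun _ => true) = 1 / (β - 1) := by
  have := (geo_hasSum h).tsum_eq
  simpa [V] using this

lemma V_false (β : ℝ) : V β (fun _ => false) = 0 := by
  simp [V]

lemma Delta_eq {β : ℝ} (h : 1 < β) :
    Delta β = {p | 0 ≤ p.1 ∧ 0 ≤ p.2 ∧ p.1 + p.2 ≤ 1 / (β - 1)} := by
  have hL : 0 < 1 / (β - 1) := by
    have : 0 < β - 1 := by linarith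
    positivity
  apply subset_antisymm
  · refine convexHull_min ?_ ?_
    · rintro _ ⟨d, hd, rfl⟩
      choose δ hδ using fun i => exists_ee (hd i)
      obtain rfl : (fun i => ee (δ i)) = d := funext hδ
      rw [pt_eq h]
      have := V_sum h δ
      have h0 := V_nonneg h (ind 0 δ)
      exact ⟨V_nonneg h _, V_nonneg h _, by simp only; linarith⟩
    · rintro ⟨x, y⟩ ⟨h1, h2, h3⟩ ⟨x', y'⟩ ⟨h1', h2', h3'⟩ a b ha hb hab
      simp only at h1 h2 h3 h1' h2' h3'
      refine ⟨?_, ?_, ?_⟩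
      · simp; positivity
      · simp; positivity
      · have e : a * (1 / (β - 1)) + b * (1 / (β - 1)) = 1 / (β - 1) := by rw [← add_mul, hab, one_mul]
        simp only [Prod.fst_add, Prod.smul_fst, smul_eq_mul, Prod.snd_add, Prod.smul_snd]
        rw [← e]
        nlinarith [mul_le_mul_of_nonneg_left h3 ha, mul_le_mul_of_nonneg_left h3' hb]
  · rintro ⟨x, y⟩ ⟨h1, h2, h3⟩
    simp only at h1 h2 h3
    set L := 1 / (β - 1) with hLd
    have m : ∀ j : Fin 3, (V β (ind 1 fun _ => j), V β (ind 2 fun _ => j)) ∈ Delta β := by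
      intro j
      apply subset_convexHull
      exact ⟨fun _ => ee j, fun _ => ee_mem j, (pt_eq h _).symm⟩
    have m0 : ((0 : ℝ), (0 : ℝ)) ∈ Delta β := by
      have := m 0
      rw [show ind 1 (fun _ => (0 : Fin 3)) = fun _ => false by funext _; rfl,
        show ind 2 (fun _ => (0 : Fin 3)) = fun _ => false by funext _; rfl] at this
      simpa only [V_false, V_true h] using this
    have m1 : (L, (0 : ℝ)) ∈ Delta β := by
      have := m 1
      rw [show ind 1 (fun _ => (1 : Fin 3)) = fun _ => true by funext _; rfl,
        show ind 2 (fun _ => (1 : Fin 3)) = fun _ => false by funext _; rfl] at this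
      simpa only [V_false, V_true h] using this
    have m2 : ((0 : ℝ), L) ∈ Delta β := by
      have := m 2
      rw [show ind 1 (fun _ => (2 : Fin 3)) = fun _ => false by funext _; rfl,
        show ind 2 (fun _ => (2 : Fin 3)) = fun _ => true by funext _; rfl] at this
      simpa only [V_false, V_true h] using this
    have hc : Convex ℝ (Delta β) := convex_convexHull _ _
    have := hc.sum_mem (t := Finset.univ) (w := ![1 - x / L - y / L, x / L, y / L])
      (z := ![((0 : ℝ), (0 : ℝ)), (L, 0), (0, L)])
      (by
        intro i _
        fin_cases i
        · simp only [Fin.zero_eta, Matrix.cons_val_zero]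
          rw [sub_sub, ← add_div, sub_nonneg, div_le_one hL]; exact h3
        · simp; positivity
        · simp; positivity)
      (by simp [Fin.sum_univ_three]; ring)
      (by
        intro i _
        fin_cases i
        · exact m0
        · exact m1
        · exact m2)
    simpa [Fin.sum_univ_three, hL.ne'] using this

lemma mem_fmap {β : ℝ} (h : 1 < β) (δ : ℕ → Fin 3) (j : Fin 3) :
    (V β (ind 1 δ), V β (ind 2 δ)) ∈ fmap β (ee j) '' Delta β ↔ β⁻¹ ≤ V β (ind j δ) := by
  have h0 : 0 < β := by linarith
  have h1 : 0 < β - 1 := by linarith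
  have e : (V β (ind 1 δ), V β (ind 2 δ)) ∈ fmap β (ee j) '' Delta β ↔
      β • (V β (ind 1 δ), V β (ind 2 δ)) - ee j ∈ Delta β := by
    constructor
    · rintro ⟨q, hq, he⟩
      rw [← he, fmap, smul_smul, mul_inv_cancel₀ h0.ne', one_smul, add_sub_cancel_right]
      exact hq
    · intro hq
      refine ⟨_, hq, ?_⟩
      rw [fmap, sub_add_cancel, smul_smul, inv_mul_cancel₀ h0.ne', one_smul]
  rw [e, Delta_eq h]
  have hs := V_sum h δ
  have a0 := V_nonneg h (ind 0 δ)
  have a1 := V_nonneg h (ind 1 δ)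
  have a2 := V_nonneg h (ind 2 δ)
  have hL : β * (1 / (β - 1)) = 1 / (β - 1) + 1 := by field_simp; ring
  rw [← hs] at hL ⊢
  rw [inv_le_iff_one_le_mul₀' h0]
  have b0 := mul_nonneg h0.le a0
  have b1 := mul_nonneg h0.le a1
  have b2 := mul_nonneg h0.le a2
  fin_cases j
  · simp [ee]
    constructor
    · rintro ⟨_, _, _⟩; linarith
    · intro _; exact ⟨by linarith, by linarith, by linarith⟩
  · simp [ee]
    intro _
    exact ⟨by linarith, by linarith⟩
  · simp [ee]
    constructor
    · rintro ⟨_, _, _⟩; linarith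
    · intro _; exact ⟨by linarith, by linarith, by linarith⟩

lemma V_head {β : ℝ} (h : 1 < β) (a : ℕ → Bool) :
    V β a = β⁻¹ * ((a 0).toNat + V β (sh 1 a)) := by
  rw [V_split h a 1]
  simp [div_eq_inv_mul, mul_add]

/-- The univoque condition in letters. -/
def W (β : ℝ) (δ : ℕ → Fin 3) : Prop := ∀ n j, δ n ≠ j → V β (sh (n + 1) (ind j δ)) < 1

lemma Ukey {β : ℝ} (h : 1 < β) (δ : ℕ → Fin 3) : (fun i => ee (δ i)) ∈ Ufat β ↔ W β δ := by
  have h0 : 0 < β := by linarith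
  have hb : 0 < β⁻¹ := by positivity
  have key : ∀ n, (∑' i : ℕ, (β ^ (i + 1))⁻¹ • ee (δ (n + i))) ∈ Ofat β ↔
      ∃ j, δ n ≠ j ∧ 1 ≤ V β (sh (n + 1) (ind j δ)) := by
    intro n
    have e := pt_eq h (sh n δ)
    simp only [sh] at e
    rw [e]
    have hV : ∀ j, V β (ind j (sh n δ)) = β⁻¹ * ((decide (δ n = j)).toNat + V β (sh (n + 1) (ind j δ))) :=
      by
        intro j
        rw [V_head h]
        have e1 : sh 1 (ind j (sh n δ)) = sh (n + 1) (ind j δ) := by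
          funext i
          exact congrArg (fun t => decide (δ t = j)) (show n + (1 + i) = n + 1 + i by omega)
        rw [e1]; simp [ind, sh]
    have hself : β⁻¹ ≤ V β (ind (δ n) (sh n δ)) := by
      rw [hV]
      have := V_nonneg h (sh (n + 1) (ind (δ n) δ))
      simp only [decide_true, Bool.toNat_true, Nat.cast_one]
      nlinarith
    have hoth : ∀ j, δ n ≠ j → (β⁻¹ ≤ V β (ind j (sh n δ)) ↔ 1 ≤ V β (sh (n + 1) (ind j δ))) := by
      intro j hj
      rw [hV]
      simp only [hj, decide_false, Bool.toNat_false, Nat.cast_zero, zero_add]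
      exact le_mul_iff_one_le_right hb
    simp only [Ofat, mem_iUnion, mem_inter_iff]
    constructor
    · rintro ⟨c, hc, d, hd, hne, m1, m2⟩
      obtain ⟨i, rfl⟩ := exists_ee hc
      obtain ⟨j, rfl⟩ := exists_ee hd
      have m1' := (mem_fmap h (sh n δ) i).1 m1
      have m2' := (mem_fmap h (sh n δ) j).1 m2
      by_cases hi : δ n = i
      · have hj : δ n ≠ j := by
          rintro rfl; exact hne (by rw [hi])
        exact ⟨j, hj, (hoth j hj).1 m2'⟩
      · exact ⟨i, hi, (hoth i hi).1 m1'⟩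
    · rintro ⟨j, hj, hv⟩
      exact ⟨ee (δ n), ee_mem _, ee j, ee_mem _, fun he => hj (ee_inj he),
        (mem_fmap h (sh n δ) _).2 hself, (mem_fmap h (sh n δ) _).2 ((hoth j hj).2 hv)⟩
  constructor
  · rintro ⟨_, hU⟩ n j hj
    by_contra hcon
    exact hU n ((key n).2 ⟨j, hj, not_lt.1 hcon⟩)
  · intro hW
    refine ⟨fun i => ee_mem _, fun n hn => ?_⟩
    obtain ⟨j, hj, hv⟩ := (key n).1 hn
    exact absurd (hW n j hj) (not_lt.2 hv)

lemma sp_ee {δ : ℕ → Fin 3} {k : ℕ} : SmallestPeriod (fun i => ee (δ i)) k ↔ SmallestPeriod δ k := by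
  have h : ∀ i j, ee i = ee j ↔ i = j := fun i j => ⟨ee_inj, fun h => by rw [h]⟩
  simp only [SmallestPeriod, ne_eq, h]

/-- The set of bases defining `betaK`. -/
def BB (k : ℕ) : Set ℝ := {β | (1 < β ∧ β ≤ 2) ∧ ∃ δ, SmallestPeriod δ k ∧ W β δ}

lemma betaK_eq (k : ℕ) : betaK k = sInf (BB k) := by
  unfold betaK BB
  congr 1
  ext β
  simp only [mem_ofPred_eq, mem_Ioc]
  refine and_congr_right fun hb => ?_
  constructor
  · rintro ⟨d, hd, hs⟩
    choose δ hδ using fun i => exists_ee (hd.1 i)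
    obtain rfl : (fun i => ee (δ i)) = d := funext hδ
    exact ⟨δ, sp_ee.1 hs, (Ukey hb.1 δ).1 hd⟩
  · rintro ⟨δ, hs, hw⟩
    exact ⟨_, (Ukey hb.1 δ).2 hw, sp_ee.2 hs⟩

lemma BB_bdd (k : ℕ) : BddBelow (BB k) := ⟨1, fun _ h => h.1.1.le⟩

lemma betaK_le {k : ℕ} {β : ℝ} (h : β ∈ BB k) : betaK k ≤ β := by
  rw [betaK_eq]; exact csInf_le (BB_bdd k) h

/-! ### Critical bases -/

lemma W_of_bound {β β' : ℝ} (h : 1 < β) (h' : β < β') {δ : ℕ → Fin 3} {α : ℕ → Bool}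
    (hα : V β α ≤ 1) (hb : ∀ n j, toLex (sh n (ind j δ)) ≤ toLex α) : W β' δ :=
  fun n j _ => V_strict h h' (V_K h hα (fun n => hb n j) (n + 1))

lemma W_mono {β β' : ℝ} (h : 1 < β) (h' : β ≤ β') {δ : ℕ → Fin 3} (hw : W β δ) : W β' δ :=
  fun n j hj => (V_anti h h' _).trans_lt (hw n j hj)

lemma Qprime {b : ℝ} {k : ℕ} {δ : ℕ → Fin 3} {α' α : ℕ → Bool} (hb : 1 < b) (hb2 : b ≤ 2)
    (hs : SmallestPeriod δ k) (hbd : ∀ n j, toLex (sh n (ind j δ)) ≤ toLex α')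
    (hl : toLex α' < toLex α) (hinf : ∀ N, ∃ i, N ≤ i ∧ α i = true) (hα : V b α ≤ 1) :
    ∃ β ∈ BB k, β < b := by
  obtain ⟨β, h1, h2, α'', h3, h4⟩ := V_Q hb hl hinf hα
  exact ⟨(β + b) / 2, ⟨⟨by linarith, by linarith⟩, δ, hs,
    W_of_bound h1 (by linarith) h4 (fun n j => (hbd n j).trans h3)⟩, by linarith⟩

lemma T_yy_form {δ : ℕ → Fin 3} {b : Fin 3} {x : ℕ → Bool} {s : ℕ} (hs : sh s δ = Tri b x) (i : ℕ) :
    ∃ n j, δ n ≠ j ∧ T (yy x i) = sh (n + 1) (ind j δ) := by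
  refine ⟨s + 3 * i, let3 b (x i), ?_, ?_⟩
  · have : sh s δ (3 * i) = let3 b (!x i) := by rw [hs, Tri_zero]
    rw [sh] at this
    rw [this]
    intro e
    rw [let3_inj] at e
    cases h : x i <;> simp [h] at e
  · rw [← sh_ind_Tri b x i, ← hs, show ind (let3 b (x i)) (sh s δ) = sh s (ind (let3 b (x i)) δ) from rfl,
      sh_sh]
    rfl

lemma not_all_le_tau {x : ℕ → Bool} {m n : ℕ} (hm : 1 ≤ m)
    (hx : SmallestPeriod x ((2 * m + 1) * 2 ^ n)) : ¬ ∀ i, toLex (yy x i) ≤ toLex tau := by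
  intro h
  have := tau_period (2 * m + 1) (by omega) n x hx.2.1 h
  have hp : 0 < 2 ^ n := by positivity
  obtain ⟨i, hi⟩ := hx.2.2 (2 ^ n) hp (by nlinarith)
  exact hi (this i)

lemma LB {m n : ℕ} {bc β : ℝ} {δ : ℕ → Fin 3} (hm : 1 ≤ m) (hbc : 1 < bc) (hV : V bc (T tau) = 1)
    (hβ : 1 < β) (hs : SmallestPeriod δ (3 * ((2 * m + 1) * 2 ^ n))) (hw : W β δ) : bc < β := by
  by_contra hcon
  push Not at hcon
  have hb : ∀ n j, δ n ≠ j → toLex (sh (n + 1) (ind j δ)) ≤ toLex (T tau) := by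
    intro n j hj
    by_contra hl
    obtain ⟨t, ht⟩ := V_lex hbc (not_le.1 hl)
    have h1 := V_K hbc hV.le lam_shift (t + 1)
    have h2 := V_anti hβ hcon (sh (n + 1) (ind j δ))
    have h3 := hw n j hj
    have h4 : 0 ≤ (bc ^ (t + 1))⁻¹ * (1 - V bc (sh (t + 1) (T tau))) :=
      mul_nonneg (by positivity) (by linarith)
    linarith
  have hp : 0 < 2 ^ n := by positivity
  obtain ⟨s, b, x, hx⟩ := triple_form hs.1 hs.2.1 (exists_ne_of_sp hs (by nlinarith)) tau_zero tau_one
    tau_two hb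
  refine not_all_le_tau hm (sp_of_Tri hx hs) fun i => ?_
  obtain ⟨n', j, hj, e⟩ := T_yy_form hx i
  rw [← T_le_iff, e]
  exact hb n' j hj

lemma attained {k : ℕ} (hk : (BB k).Nonempty) (h1 : 1 < betaK k) :
    ∃ δ, SmallestPeriod δ k ∧ ∀ n j, δ n ≠ j → V (betaK k) (sh (n + 1) (ind j δ)) ≤ 1 := by
  have hk0 : 0 < k := by
    obtain ⟨_, _, δ, hδ, _⟩ := hk
    exact hδ.1
  set ext : (Fin k → Fin 3) → ℕ → Fin 3 := fun w i => w ⟨i % k, Nat.mod_lt _ hk0⟩ with hext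
  have hB : ∀ β ∈ BB k, ∃ w, SmallestPeriod (ext w) k ∧ W β (ext w) := by
    rintro β ⟨_, δ, hδ, hw⟩
    have e : ext (fun i => δ i) = δ := by
      funext i
      have := per_mul hδ.2.1 (i / k) (i % k)
      simp only [hext]
      rw [← this]
      congr 1
      rw [mul_comm]; exact Nat.mod_add_div i k
    exact ⟨fun i => δ i, by rw [e]; exact hδ, by rw [e]; exact hw⟩
  have hall : ∃ w, ∀ β ∈ BB k, SmallestPeriod (ext w) k ∧ W β (ext w) := by
    by_contra hcon
    push Not at hcon
    choose f hf hf2 using hcon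
    obtain ⟨w0, hw0⟩ := Finite.exists_min f
    obtain ⟨w, hw, hW⟩ := hB _ (hf w0)
    exact hf2 w hw (W_mono (hf w0).1.1 (hw0 w) hW)
  obtain ⟨w, hw⟩ := hall
  refine ⟨ext w, (hw _ hk.choose_spec).1, fun n j hj => ?_⟩
  set a := sh (n + 1) (ind j (ext w)) with ha
  set b := betaK k with hb
  have hb0 : 0 < b := by linarith
  have hlt : ∀ β, b < β → V β a < 1 := by
    intro β hβ
    rw [hb, betaK_eq] at hβ
    obtain ⟨β', hβ', hl⟩ := exists_lt_of_csInf_lt hk hβ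
    exact W_mono hβ'.1.1 hl.le (hw β' hβ').2 n j hj
  unfold V
  refine Real.tsum_le_of_sum_range_le (fun i => by positivity) fun N => ?_
  have hc : ContinuousAt (fun β : ℝ => ∑ i ∈ Finset.range N, ((a i).toNat : ℝ) / β ^ (i + 1)) b := by
    have : ∀ i : ℕ, b ^ (i + 1) ≠ 0 := fun i => by positivity
    refine tendsto_finsetSum _ fun i _ => ?_
    exact ContinuousAt.div continuousAt_const (continuousAt_id.pow _) (this i)
  refine le_of_tendsto (hc.tendsto.mono_left (nhdsWithin_le_nhds (s := Ioi b))) ?_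
  filter_upwards [self_mem_nhdsWithin] with β hβ
  have hβ1 : 1 < β := lt_trans h1 hβ
  have := hlt β hβ
  rw [V_split hβ1 a N] at this
  have h3 : 0 ≤ (β ^ N)⁻¹ * V β (sh N a) := mul_nonneg (by positivity) (V_nonneg hβ1 _)
  linarith

lemma base_seq (m : ℕ) (hm : 1 ≤ m) (n : ℕ) : ∃ δ : ℕ → Fin 3,
    SmallestPeriod δ (3 * ((2 * m + 1) * 2 ^ n)) ∧
    ∀ t j, toLex (sh t (ind j δ)) ≤ toLex (T (R^[n] alpha0)) := by
  obtain ⟨x, hx, hy⟩ := exists_x m hm n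
  exact ⟨Tri 0 x, sp_Tri hx, fun t j => sh_ind_Tri_le hy (Riter_alpha0 n).1 0 t j⟩

lemma exists_lt_two (m : ℕ) (hm : 1 ≤ m) (n : ℕ) :
    ∃ β ∈ BB (3 * ((2 * m + 1) * 2 ^ n)), β < 2 := by
  obtain ⟨δ, hs, hb⟩ := base_seq m hm n
  refine Qprime (α := fun _ => true) (by norm_num) le_rfl hs hb ?_ (fun N => ⟨N, le_rfl, rfl⟩) ?_
  · refine (llt_iff _ _).2 ⟨1, fun i hi => ?_, T_one _ 0, rfl⟩
    obtain rfl : i = 0 := by omega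
    rw [T_zero]
  · rw [V_true (by norm_num)]; norm_num

lemma bc_le {m n : ℕ} {bc : ℝ} (hm : 1 ≤ m) (hbc : 1 < bc) (hV : V bc (T tau) = 1) :
    bc ≤ betaK (3 * ((2 * m + 1) * 2 ^ n)) := by
  obtain ⟨β, hβ, _⟩ := exists_lt_two m hm n
  rw [betaK_eq]
  refine le_csInf ⟨β, hβ⟩ ?_
  rintro β ⟨⟨h1, _⟩, δ, hs, hw⟩
  exact (LB hm hbc hV h1 hs hw).le

lemma strict_step {m n : ℕ} {bc : ℝ} (hm : 1 ≤ m) (hbc : 1 < bc) (hV : V bc (T tau) = 1) :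
    betaK (3 * (2 * ((2 * m + 1) * 2 ^ n))) < betaK (3 * ((2 * m + 1) * 2 ^ n)) := by
  have hble := bc_le (n := n) hm hbc hV
  obtain ⟨β0, hβ0, hβ2⟩ := exists_lt_two m hm n
  obtain ⟨δ0, hs0, hbd0⟩ := base_seq m hm n
  have hp2 : 2 ≤ (2 * m + 1) * 2 ^ n := by
    have hp : 0 < 2 ^ n := by positivity
    nlinarith
  set p := (2 * m + 1) * 2 ^ n with hp
  set b := betaK (3 * p) with hb
  have hb1 : 1 < b := by linarith
  have hb2 : b ≤ 2 := (betaK_le hβ0).trans hβ2.le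
  obtain ⟨δ, hs, hV1⟩ := attained ⟨β0, hβ0⟩ hb1
  have hbd : ∀ t j, δ t ≠ j → toLex (sh (t + 1) (ind j δ)) ≤ toLex (T (R^[n] alpha0)) := by
    intro t j hj
    by_contra hl
    have hl' := not_le.1 hl
    obtain ⟨i, _, _, hi⟩ := (llt_iff _ _).1 hl'
    obtain ⟨β, hβ, hlt⟩ := Qprime hb1 hb2 hs0 hbd0 hl' (fun N => ⟨i + N * (3 * p), by nlinarith, by
      rw [← hi]
      simp only [sh, ind]
      rw [← add_assoc, per_mul hs.2.1]⟩) (hV1 t j hj)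
    exact absurd (betaK_le hβ) (not_le.2 hlt)
  obtain ⟨g0, g1, g2⟩ := Riter_alpha0 n
  obtain ⟨s, bl, x, hx⟩ := triple_form hs.1 hs.2.1 (exists_ne_of_sp hs (by omega)) g0 g1 g2 hbd
  have hsx := sp_of_Tri hx hs
  obtain ⟨i0, hi0, hmax'⟩ := Finset.exists_max_image (Finset.range p) (fun i => toLex (yy x i))
    ⟨0, Finset.mem_range.2 (by omega)⟩
  have hmax : ∀ i, toLex (yy x i) ≤ toLex (yy x i0) := by
    intro i
    have e : yy x i = yy x (i % p) := by
      funext l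
      have e1 := per_mul hsx.2.1 (i / p) (i % p)
      have e2 := per_mul hsx.2.1 (i / p) (i % p + 1 + l)
      have e3 : i % p + i / p * p = i := by rw [mul_comm]; exact Nat.mod_add_div i p
      rw [e3] at e1
      rw [show i % p + 1 + l + i / p * p = i + 1 + l by omega] at e2
      simp only [yy]
      rw [e1, e2]
    rw [e]
    exact hmax' _ (Finset.mem_range.2 (Nat.mod_lt _ (by omega)))
  set ν := yy x i0 with hν
  have hν0 : ν 0 = true := by
    obtain ⟨i, hi⟩ := exists_ne_of_sp hsx hp2
    have h1 : yy x i 0 = true := by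
      simp only [yy, add_zero]
      cases h : x i <;> cases h' : x (i + 1) <;> simp_all
    by_contra hc
    exact absurd (hmax i) (not_le.2 ((llt_iff _ _).2 ⟨0, fun _ h => absurd h (by omega),
      by simpa using hc, h1⟩))
  have htau : toLex tau < toLex ν := by
    by_contra hc
    exact not_all_le_tau hm hsx fun i => (hmax i).trans (not_lt.1 hc)
  have hVν : V b (T ν) ≤ 1 := by
    obtain ⟨t, j, hj, e⟩ := T_yy_form hx i0
    rw [e]; exact hV1 t j hj
  obtain ⟨β, hβ, hlt⟩ := Qprime hb1 hb2 (sp_Tri (b := 0) (sp_Dd hsx hp2))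
    (fun t j => sh_ind_Tri_le (yy_Dd_le hmax hν0) (R_zero ν) 0 t j) (T_lt (R_lt_self htau))
    (fun N => by
      cases h : ν N
      · exact ⟨3 * N + 3, by omega, by rw [T_three, h]; rfl⟩
      · exact ⟨3 * N + 2, by omega, by rw [T_two, h]⟩) hVν
  exact (betaK_le hβ).trans_lt hlt

lemma limit_step {m : ℕ} {bc a : ℝ} (hm : 1 ≤ m) (hbc : 1 < bc) (hV : V bc (T tau) = 1) (ha : bc < a) :
    ∀ᶠ n in atTop, betaK (3 * ((2 * m + 1) * 2 ^ n)) < a := by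
  by_cases ha2 : 2 ≤ a
  · filter_upwards with n
    obtain ⟨β, hβ, hl⟩ := exists_lt_two m hm n
    exact ((betaK_le hβ).trans_lt hl).trans_le ha2
  push Not at ha2
  obtain ⟨β1, h1, h1a⟩ := exists_between ha
  obtain ⟨β2, h2, h2a⟩ := exists_between h1a
  have hβ1 : 1 < β1 := hbc.trans h1
  have hβ0 : 0 < β1 := by linarith
  have hlt : V β1 (T tau) < 1 := V_strict hbc h1 hV.le
  have ht : Tendsto (fun n : ℕ => V β1 (T tau) + (β1 ^ n)⁻¹ * (1 / (β1 - 1))) atTop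
      (nhds (V β1 (T tau) + 0 * (1 / (β1 - 1)))) := by
    refine tendsto_const_nhds.add (Tendsto.mul_const _ ?_)
    exact tendsto_inv_atTop_zero.comp (tendsto_pow_atTop_atTop_of_one_lt hβ1)
  rw [zero_mul, add_zero] at ht
  filter_upwards [ht.eventually_lt_const hlt] with n hn
  have hb : V β1 (T (R^[n] alpha0)) ≤ 1 := by
    have e1 := V_split hβ1 (T (R^[n] alpha0)) n
    have e2 := V_split hβ1 (T tau) n
    rw [Finset.sum_congr rfl (fun i hi => by
      rw [T_agree (Riter_agree alpha0 n) i (by have := Finset.mem_range.1 hi; omega)])] at e1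
    have e3 : 0 ≤ (β1 ^ n)⁻¹ * V β1 (sh n (T tau)) := mul_nonneg (by positivity) (V_nonneg hβ1 _)
    have e4 : (β1 ^ n)⁻¹ * V β1 (sh n (T (R^[n] alpha0))) ≤ (β1 ^ n)⁻¹ * (1 / (β1 - 1)) :=
      mul_le_mul_of_nonneg_left (V_le hβ1 _) (by positivity)
    linarith
  obtain ⟨δ, hs, hbd⟩ := base_seq m hm n
  refine (betaK_le (β := β2) ⟨⟨by linarith, by linarith⟩, δ, hs, ?_⟩).trans_lt h2a
  exact W_of_bound hβ1 h2 hb hbd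

/-- For fixed m ≥ 1, the sequence n ↦ β_{3(2m+1)2ⁿ} is strictly decreasing
and converges to β_c. -/
theorem stmt9 (m : ℕ) (hm : 1 ≤ m) (bc : ℝ) (hbc : FatSierpinski.IsBetaC bc) :
    StrictAnti (fun n : ℕ => FatSierpinski.betaK (3 * (2 * m + 1) * 2 ^ n)) ∧
    Filter.Tendsto (fun n : ℕ => FatSierpinski.betaK (3 * (2 * m + 1) * 2 ^ n))
      Filter.atTop (nhds bc) := by
  obtain ⟨⟨h1, _⟩, hsum⟩ := hbc
  have hV : V bc (T tau) = 1 := by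
    rw [← hsum]
    unfold V
    refine tsum_congr fun i => ?_
    rw [lamSeq_eq]
  have e : ∀ n, 3 * (2 * m + 1) * 2 ^ n = 3 * ((2 * m + 1) * 2 ^ n) := fun n => by ring
  constructor
  · refine strictAnti_nat_of_succ_lt fun n => ?_
    have := strict_step (n := n) hm h1 hV
    rw [e n, show 3 * (2 * m + 1) * 2 ^ (n + 1) = 3 * (2 * ((2 * m + 1) * 2 ^ n)) by ring]
    exact this
  · simp only [e]
    refine tendsto_order.2 ⟨fun a ha => ?_, fun a ha => limit_step hm h1 hV ha⟩
    exact Filter.Eventually.of_forall fun n => ha.trans_le (bc_le hm h1 hV)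

end FatSierpinski
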